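/- arXiv:2510.22006 — 3 statements merged into one kernel-verified Lean document; each statement's English description precedes it below -/
import Mathlib

section
/- For all integers α ≥ 1 and n ≥ 0, the number 23·3^{2α} + 1 is divisible by 8 and pond(3^{2α+1}·n + (23·3^{2α} + 1)/8) ≡ 0 (mod 6). -/
/-!
The generating function of `pond` is
`∑ pond(n) q^n = ∏ (1 + q^(6i+3)) / ((1 - q^(4i+2)) (1 - q^(2i+2)))`, because an odd part `k`
contributes `1 + q^(2k) + q^(3k) + ⋯ = (1 + q^(3k)) / (1 - q^(2k))`. Write `f_n = ∏ (1 - q^(n i))`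
over `i ≥ 1`, `φ(-q) = ∑ (-1)^k q^(k²) = f_1² / f_2` (sum over `k ∈ ℤ`) and
`ψ(q) = ∑ q^(k(k+1)/2) = f_2² / f_1` (sum over `k ≥ 0`).

Modulo `2` the denominator is `f_2² / f_4 ≡ 1`, so the series is one in `q³`, and `pond(m)` is even
as soon as `3 ∤ m` (`even_pond`).

Modulo `3` `f_{3n} ≡ f_n³`, and the series becomes `φ(-q²)² / f_3` (`pond_mod_three`). The
3-dissections `φ(-q) = φ(-q⁹) - 2 q Ω(-q³)` and `ψ(q) = A(q³) + q ψ(q⁹)`, with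
`Ω(-q) = ∑ (-1)^k q^(3k²+2k)` and `A(q) = ∑ q^(k(3k+1)/2)` (sums over `k ∈ ℤ`), where all the theta
functions are eta quotients by the Jacobi triple product, then give modulo `3`

* `∑ pond(3n+2) q^n ≡ 2 f_6 ψ(q) ψ(q²)` (`ext_pond`),
* `∑ pond(9n+8) q^n ≡ 2 ψ(q) f_3² f_12² / f_6²` (`ext_ext_pond`).

As `ψ(q)` has no exponents congruent to `2` modulo `3`, `pond(27n+26) ≡ 0` (`pond_base`). Extracting
the exponents `3n+1` instead gives `2 ψ(q³) f_1² f_4² / f_2² ≡ 2 f_6 ψ(q) ψ(q²)`, that is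
`pond(27n+17) ≡ pond(3n+2)` (`pond_step`). The family follows by induction on `α`, since its indices
satisfy `m_1 = 27 n + 26` and `m_{α+1} = 9 m_α - 1` with `m_α ≡ 2` modulo `3`.

The Jacobi triple product is obtained as the limit of its finite form with Gaussian binomial
coefficients (`finite_triple`); the passage to the limit is made coefficientwise, through
divisibility of differences by powers of `X`.
-/

open PowerSeries

/-- `pond n` is the number of partitions of `n` in which no odd part appears exactly once. -/
noncomputable def pond (n : ℕ) : ℕ :=
  Nat.card {p : n.Partition // ∀ k ∈ p.parts, Odd k → 2 ≤ p.parts.count k}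

namespace PondProof

open scoped PowerSeries.WithPiTopology
open Finset.HasAntidiagonal (antidiagonal mem_antidiagonal)

/-! ### The finite Jacobi triple product -/

section Finite

variable {A : Type*} [CommRing A]

/-- The Gaussian binomial coefficient `[i + j; i]` in base `c`. -/
def gauss (c : A) : ℕ → ℕ → A
  | 0, _ => 1
  | _ + 1, 0 => 1
  | i + 1, j + 1 => c ^ (j + 1) * gauss c i (j + 1) + gauss c (i + 1) j

/-- The finite product `(1 - c)(1 - c ^ 2) ⋯ (1 - c ^ n)`. -/
def poch (c : A) (n : ℕ) : A := ∏ i ∈ Finset.range n, (1 - c ^ (i + 1))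

lemma poch_succ (c : A) (n : ℕ) : poch c (n + 1) = poch c n * (1 - c ^ (n + 1)) :=
  Finset.prod_range_succ _ _

@[simp] lemma gauss_zero_left (c : A) (j : ℕ) : gauss c 0 j = 1 := by
  cases j <;> simp [gauss]

@[simp] lemma gauss_zero_right (c : A) (i : ℕ) : gauss c i 0 = 1 := by
  cases i <;> simp [gauss]

lemma gauss_succ (c : A) (i j : ℕ) :
    gauss c (i + 1) (j + 1) = c ^ (j + 1) * gauss c i (j + 1) + gauss c (i + 1) j := by
  simp [gauss]

lemma gauss_mul_poch (c : A) : ∀ i j : ℕ,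
    gauss c i j * poch c i * poch c j = poch c (i + j)
  | 0, j => by simp [poch]
  | i + 1, 0 => by simp [poch]
  | i + 1, j + 1 => by
    have h1 := gauss_mul_poch c i (j + 1)
    have h2 := gauss_mul_poch c (i + 1) j
    have e : i + 1 + (j + 1) = (i + j + 1) + 1 := by ring
    rw [show i + (j + 1) = i + j + 1 by ring] at h1
    rw [show i + 1 + j = i + j + 1 by ring] at h2
    rw [gauss_succ, e, poch_succ c (i + j + 1)]
    calc _ = c ^ (j + 1) * (1 - c ^ (i + 1)) * (gauss c i (j + 1) * poch c i * poch c (j + 1))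
          + (1 - c ^ (j + 1)) * (gauss c (i + 1) j * poch c (i + 1) * poch c j) := by
            rw [poch_succ c i, poch_succ c j]; ring
      _ = _ := by rw [h1, h2]; ring

/-- The second Pascal rule for Gaussian binomials. -/
lemma gauss_succ' [IsDomain A] (c : A) (hc : ∀ n, poch c n ≠ 0) (i j : ℕ) :
    gauss c (i + 1) (j + 1) = gauss c i (j + 1) + c ^ (i + 1) * gauss c (i + 1) j := by
  apply mul_right_cancel₀ (mul_ne_zero (hc (i + 1)) (hc (j + 1)))
  have h1 := gauss_mul_poch c i (j + 1)
  have h2 := gauss_mul_poch c (i + 1) j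
  have h3 := gauss_mul_poch c (i + 1) (j + 1)
  rw [show i + 1 + (j + 1) = (i + j + 1) + 1 by ring, poch_succ c (i + j + 1)] at h3
  rw [show i + (j + 1) = i + j + 1 by ring] at h1
  rw [show i + 1 + j = i + j + 1 by ring] at h2
  calc _ = gauss c (i + 1) (j + 1) * poch c (i + 1) * poch c (j + 1) := by ring
    _ = (1 - c ^ (i + 1)) * (gauss c i (j + 1) * poch c i * poch c (j + 1))
          + c ^ (i + 1) * (1 - c ^ (j + 1)) * (gauss c (i + 1) j * poch c (i + 1) * poch c j) := by
        rw [h1, h2, h3]; ring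
    _ = _ := by rw [poch_succ c i, poch_succ c j]; ring

lemma sum_gauss_succ (c : A) (t : ℕ → A) (N : ℕ) :
    ∑ p ∈ antidiagonal (N + 1), gauss c p.1 p.2 * t p.1 =
      ∑ p ∈ antidiagonal N, gauss c p.1 p.2 * (t p.1 + c ^ p.2 * t (p.1 + 1)) := by
  cases N with
  | zero => simp [Finset.Nat.antidiagonal_succ]
  | succ M =>
    simp only [mul_add, Finset.sum_add_distrib]
    rw [Finset.Nat.sum_antidiagonal_succ, Finset.Nat.sum_antidiagonal_succ',
      Finset.Nat.sum_antidiagonal_succ (n := M) (f := fun p => gauss c p.1 p.2 * t p.1),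
      Finset.Nat.sum_antidiagonal_succ' (n := M)]
    simp only [gauss_succ, gauss_zero_left, gauss_zero_right, add_mul, Finset.sum_add_distrib]
    have : ∑ x ∈ antidiagonal M, c ^ (x.2 + 1) * gauss c x.1 (x.2 + 1) * t (x.1 + 1) =
      ∑ x ∈ antidiagonal M, gauss c x.1 (x.2 + 1) * (c ^ (x.2 + 1) * t (x.1 + 1)) :=
      Finset.sum_congr rfl fun x _ => by ring
    rw [this]; ring

lemma sum_gauss_succ' [IsDomain A] (c : A) (hc : ∀ n, poch c n ≠ 0) (t : ℕ → A) (N : ℕ) :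
    ∑ p ∈ antidiagonal (N + 1), gauss c p.1 p.2 * t p.1 =
      ∑ p ∈ antidiagonal N, gauss c p.1 p.2 * (c ^ p.1 * t p.1 + t (p.1 + 1)) := by
  cases N with
  | zero => simp [Finset.Nat.antidiagonal_succ]
  | succ M =>
    simp only [mul_add, Finset.sum_add_distrib]
    rw [Finset.Nat.sum_antidiagonal_succ, Finset.Nat.sum_antidiagonal_succ',
      Finset.Nat.sum_antidiagonal_succ (n := M)
        (f := fun p => gauss c p.1 p.2 * (c ^ p.1 * t p.1)),
      Finset.Nat.sum_antidiagonal_succ' (n := M)]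
    simp only [gauss_succ' c hc, gauss_zero_left, gauss_zero_right, add_mul,
      Finset.sum_add_distrib]
    have : ∑ x ∈ antidiagonal M, c ^ (x.1 + 1) * gauss c (x.1 + 1) x.2 * t (x.1 + 1) =
      ∑ x ∈ antidiagonal M, gauss c (x.1 + 1) x.2 * (c ^ (x.1 + 1) * t (x.1 + 1)) :=
      Finset.sum_congr rfl fun x _ => by ring
    rw [this]; simp; ring

/-- The triangular number `k (k + 1) / 2` of an integer, as a natural number. -/
def tri (k : ℤ) : ℕ := (k * (k + 1) / 2).toNat

lemma tri_mul_two (k : ℤ) : 2 * (tri k : ℤ) = k * (k + 1) := by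
  have h2 : (2 : ℤ) ∣ k * (k + 1) := (Int.even_mul_succ_self k).two_dvd
  have h0 : 0 ≤ k * (k + 1) := by
    rcases le_or_gt 0 k with h | h <;> nlinarith
  rw [tri, Int.toNat_of_nonneg (by positivity)]
  omega

lemma tri_succ (k : ℤ) : (tri (k + 1) : ℤ) = tri k + k + 1 := by
  have h1 := tri_mul_two k
  have h2 := tri_mul_two (k + 1)
  linarith

lemma tri_pred (k : ℤ) : (tri (k - 1) : ℤ) = tri k - k := by
  have := tri_succ (k - 1)
  rw [sub_add_cancel] at this
  linarith

/-- The general term `a ^ (k (k + 1) / 2) * b ^ (k (k - 1) / 2)` of Ramanujan's theta function. -/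
def term (a b : A) (k : ℤ) : A := a ^ tri k * b ^ tri (k - 1)

/-- A finite form of the Jacobi triple product. -/
lemma finite_triple [IsDomain A] (a b : A) (hc : ∀ n, poch (a * b) n ≠ 0) (m n : ℕ) :
    (∏ i ∈ Finset.range m, (1 + a * (a * b) ^ i)) *
      (∏ i ∈ Finset.range n, (1 + b * (a * b) ^ i)) =
    ∑ p ∈ antidiagonal (m + n), gauss (a * b) p.1 p.2 * term a b ((p.1 : ℤ) - n) := by
  induction m with
  | zero =>
    induction n with
    | zero => simp [term, tri]
    | succ n ih =>
      have := sum_gauss_succ' (a * b) hc (fun i => term a b ((i : ℤ) - (n + 1 : ℕ))) (0 + n)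
      rw [← add_assoc, this, Finset.prod_range_succ, ← mul_assoc, ih, Finset.sum_mul]
      refine Finset.sum_congr rfl fun p hp => ?_
      rw [mul_assoc]
      congr 1
      have e : ((p.1 + 1 : ℕ) : ℤ) - (n + 1 : ℕ) = p.1 - n := by push_cast; ring
      have e' : (p.1 : ℤ) - (n + 1 : ℕ) = p.1 - n - 1 := by push_cast; ring
      rw [e, e', mul_add, mul_one, add_comm]
      congr 1
      simp only [term, mul_pow]
      have h1 := tri_pred (p.1 - n)
      have h2 := tri_pred (p.1 - n - 1)
      have ha : tri (p.1 - n) + n = p.1 + tri (p.1 - n - 1) := by omega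
      have hb : tri (p.1 - n - 1) + 1 + n = p.1 + tri (p.1 - n - 1 - 1) := by omega
      calc _ = a ^ (tri (p.1 - n) + n) * b ^ (tri (p.1 - n - 1) + 1 + n) := by ring
        _ = _ := by rw [ha, hb]; ring
  | succ m ih =>
    have := sum_gauss_succ (a * b) (fun i => term a b ((i : ℤ) - n)) (m + n)
    rw [show m + 1 + n = m + n + 1 by ring, this, Finset.prod_range_succ, mul_right_comm, ih,
      Finset.sum_mul]
    refine Finset.sum_congr rfl fun p hp => ?_
    rw [mul_assoc]
    congr 1
    have e : ((p.1 + 1 : ℕ) : ℤ) - n = p.1 - n + 1 := by push_cast; ring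
    rw [e, mul_add, mul_one]
    congr 1
    rw [mem_antidiagonal] at hp
    simp only [term, mul_pow, add_sub_cancel_right]
    have h1 := tri_pred (p.1 - n)
    have h2 := tri_succ (p.1 - n)
    have ha : tri (p.1 - n) + 1 + m = p.2 + tri (p.1 - n + 1) := by omega
    have hb : tri (p.1 - n - 1) + m = p.2 + tri (p.1 - n) := by omega
    calc _ = a ^ (tri (p.1 - n) + 1 + m) * b ^ (tri (p.1 - n - 1) + m) := by ring
      _ = _ := by rw [ha, hb]; ring

end Finite

/-! ### Infinite products of power series -/

section Products

variable {K : Type*} [Field K]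

/-- The finite product `∏ (1 + s X ^ (a + m i))` over `i < n`. -/
noncomputable def qfin (s : K) (a m n : ℕ) : K⟦X⟧ :=
  ∏ i ∈ Finset.range n, (1 + C s * X ^ (a + m * i))

lemma eq_of_forall_X_pow_dvd {F G : K⟦X⟧} (h : ∀ n : ℕ, (X : K⟦X⟧) ^ n ∣ F - G) : F = G := by
  ext d
  have := X_pow_dvd_iff.mp (h (d + 1)) d (Nat.lt_succ_self d)
  rwa [map_sub, sub_eq_zero] at this

lemma dvd_mul_sub_mul' {A : Type*} [CommRing A] {x a b c d : A} (h : x ∣ a - b)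
    (h' : x ∣ c - d) : x ∣ a * c - b * d := by
  have : a * c - b * d = (a - b) * c + b * (c - d) := by ring
  rw [this]
  exact dvd_add (h.mul_right _) (h'.mul_left _)

lemma X_pow_dvd_prod_sub_one {ι : Type*} (S : Finset ι) (D : ℕ) (f : ι → K⟦X⟧)
    (h : ∀ i ∈ S, X ^ D ∣ f i - 1) : X ^ D ∣ ∏ i ∈ S, f i - 1 := by
  classical
  induction S using Finset.induction_on with
  | empty => simp
  | insert i S hi ih =>
    rw [Finset.prod_insert hi]
    have := dvd_mul_sub_mul' (h i (by simp)) (ih fun j hj => h j (by simp [hj]))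
    simpa using this

variable [TopologicalSpace K] [DiscreteTopology K]

/-- The infinite product `∏ (1 + s X ^ (a + m i))` over all `i : ℕ`. It is meaningful for
`0 < m`, where the product converges. -/
noncomputable def qinf (s : K) (a m : ℕ) : K⟦X⟧ := ∏' i : ℕ, (1 + C s * X ^ (a + m * i))

omit [DiscreteTopology K] in
lemma multipliable_q (s : K) (a : ℕ) {m : ℕ} (hm : 0 < m) :
    Multipliable fun i : ℕ => (1 + C s * X ^ (a + m * i) : K⟦X⟧) := by
  refine WithPiTopology.multipliable_one_add_of_tendsto_order_atTop_nhds_top _ ?_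
  refine ENat.tendsto_nhds_top_iff_natCast_lt.mpr fun n => ?_
  filter_upwards [Filter.eventually_gt_atTop n] with i hi
  have h1 : ((a + m * i : ℕ) : ℕ∞) ≤ (C s * X ^ (a + m * i) : K⟦X⟧).order := by
    refine le_order _ _ fun j hj => ?_
    rw [coeff_C_mul, coeff_X_pow, if_neg (by have : j < a + m * i := (by exact_mod_cast hj); omega),
      mul_zero]
  refine lt_of_lt_of_le ?_ h1
  exact_mod_cast (by nlinarith : n < a + m * i)

lemma X_pow_dvd_of_hasProd {D : ℕ} {f : ℕ → K⟦X⟧} {F : K⟦X⟧} (hF : HasProd f F)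
    (h : ∀ i, X ^ D ∣ f i - 1) : X ^ D ∣ F - 1 := by
  rw [X_pow_dvd_iff]
  intro d hd
  have h1 := (WithPiTopology.tendsto_iff_coeff_tendsto K _ _ _).mp hF d
  have h2 : ∀ S : Finset ℕ, coeff d (∏ i ∈ S, f i) = coeff d (1 : K⟦X⟧) := fun S => by
    have := X_pow_dvd_iff.mp (X_pow_dvd_prod_sub_one S D f fun i _ => h i) d hd
    rwa [map_sub, sub_eq_zero] at this
  simp only [h2] at h1
  rw [map_sub, sub_eq_zero]
  exact (tendsto_nhds_unique h1 tendsto_const_nhds)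

lemma qinf_eq_mul (s : K) (a : ℕ) {m : ℕ} (hm : 0 < m) (n : ℕ) :
    qinf s a m = qfin s a m n * qinf s (a + m * n) m := by
  have e : ∀ i : ℕ, (1 + C s * X ^ (a + m * (i + n)) : K⟦X⟧) =
      1 + C s * X ^ (a + m * n + m * i) := fun i => by
    rw [show a + m * (i + n) = a + m * n + m * i by ring]
  have h : Multipliable fun i : ℕ => (1 + C s * X ^ (a + m * (i + n)) : K⟦X⟧) := by
    simp only [e]
    exact multipliable_q s (a + m * n) hm
  have := Multipliable.prod_mul_tprod_nat_mul' (f := fun i : ℕ =>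
    (1 + C s * X ^ (a + m * i) : K⟦X⟧)) (k := n) h
  simp only [e] at this
  exact this.symm

lemma X_pow_dvd_qinf_sub_one (s : K) (a : ℕ) {m : ℕ} (hm : 0 < m) :
    (X : K⟦X⟧) ^ a ∣ qinf s a m - 1 := by
  refine X_pow_dvd_of_hasProd (multipliable_q s a hm).hasProd fun i => ?_
  rw [add_sub_cancel_left]
  exact (pow_dvd_pow _ (by omega)).mul_left _

/-- The infinite product is approximated by its partial products. -/
lemma X_pow_dvd_qinf_sub_qfin (s : K) (a : ℕ) {m : ℕ} (hm : 0 < m) {D n : ℕ} (hD : D ≤ n) :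
    (X : K⟦X⟧) ^ D ∣ qinf s a m - qfin s a m n := by
  rw [qinf_eq_mul s a hm n]
  have h : (X : K⟦X⟧) ^ D ∣ qinf s (a + m * n) m - 1 :=
    (pow_dvd_pow _ (by nlinarith)).trans (X_pow_dvd_qinf_sub_one s _ hm)
  have := h.mul_left (qfin s a m n)
  rwa [mul_sub, mul_one] at this

lemma constantCoeff_qinf (s : K) {a m : ℕ} (ha : 0 < a) (hm : 0 < m) :
    constantCoeff (qinf s a m) = 1 := by
  have := X_pow_dvd_iff.mp (X_pow_dvd_qinf_sub_one s a hm) 0 ha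
  simpa [sub_eq_zero] using this

lemma qinf_ne_zero (s : K) {a m : ℕ} (ha : 0 < a) (hm : 0 < m) : qinf s a m ≠ 0 := fun h => by
  have := constantCoeff_qinf s ha hm
  simp [h] at this

lemma qinf_expand (s : K) (a : ℕ) {m : ℕ} (hm : 0 < m) (p : ℕ) (hp : p ≠ 0) :
    expand p hp (qinf s a m) = qinf s (p * a) (p * m) := by
  refine eq_of_forall_X_pow_dvd fun n => ?_
  have h1 := X_pow_dvd_qinf_sub_qfin s a hm (le_refl n)
  have h2 := X_pow_dvd_qinf_sub_qfin s (p * a) (m := p * m) (by positivity) (le_refl n)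
  have h3 := map_dvd (expand p hp) h1
  have h4 : expand p hp (qfin s a m n) = qfin s (p * a) (p * m) n := by
    simp only [qfin, map_prod, map_add, map_one, map_mul, map_pow, expand_X, expand_C]
    refine Finset.prod_congr rfl fun i _ => ?_
    ring
  rw [map_sub, map_pow, expand_X, h4, ← pow_mul] at h3
  have h5 := dvd_sub ((pow_dvd_pow (X : K⟦X⟧)
    (Nat.le_mul_of_pos_left n (Nat.pos_of_ne_zero hp))).trans h3) h2
  simpa using h5

lemma qinf_split_two (s : K) (a : ℕ) {m : ℕ} (hm : 0 < m) :
    qinf s a m = qinf s a (2 * m) * qinf s (a + m) (2 * m) := by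
  have e0 : ∀ k : ℕ, (1 + C s * X ^ (a + m * (2 * k)) : K⟦X⟧) = 1 + C s * X ^ (a + 2 * m * k) :=
    fun k => by ring
  have e1 : ∀ k : ℕ, (1 + C s * X ^ (a + m * (2 * k + 1)) : K⟦X⟧) =
    1 + C s * X ^ (a + m + 2 * m * k) := fun k => by ring
  have := tprod_even_mul_odd (f := fun i : ℕ => (1 + C s * X ^ (a + m * i) : K⟦X⟧))
    (by simp only [e0]; exact multipliable_q s a (by omega))
    (by simp only [e1]; exact multipliable_q s _ (by omega))
  simp only [e0, e1] at this
  exact this.symm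

lemma qinf_split_three (s : K) (a : ℕ) {m : ℕ} (hm : 0 < m) :
    qinf s a m = qinf s a (3 * m) * qinf s (a + m) (3 * m) * qinf s (a + 2 * m) (3 * m) := by
  refine eq_of_forall_X_pow_dvd fun n => ?_
  have h1 := X_pow_dvd_qinf_sub_qfin s a hm (by omega : n ≤ 3 * n)
  have h2 := dvd_mul_sub_mul' (dvd_mul_sub_mul'
    (X_pow_dvd_qinf_sub_qfin s a (m := 3 * m) (by omega) (le_refl n))
    (X_pow_dvd_qinf_sub_qfin s (a + m) (m := 3 * m) (by omega) (le_refl n)))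
    (X_pow_dvd_qinf_sub_qfin s (a + 2 * m) (m := 3 * m) (by omega) (le_refl n))
  have h3 : qfin s a m (3 * n) = qfin s a (3 * m) n * qfin s (a + m) (3 * m) n
      * qfin s (a + 2 * m) (3 * m) n := by
    clear h1 h2
    induction n with
    | zero => simp [qfin]
    | succ n ih =>
      simp only [qfin, mul_add, mul_one, Finset.prod_range_succ] at ih ⊢
      rw [ih]
      ring
  rw [h3] at h1
  simpa using dvd_sub h1 h2

lemma qinf_one_mul_neg_one (a : ℕ) {m : ℕ} (hm : 0 < m) :
    qinf (1 : K) a m * qinf (-1) a m = qinf (-1) (2 * a) (2 * m) := by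
  rw [qinf, qinf, qinf, ← (multipliable_q _ a hm).tprod_mul (multipliable_q _ a hm)]
  congr 1
  ext1 i
  simp only [map_neg, map_one]
  ring

/-- The Frobenius congruence for the infinite products, in characteristic `p`. -/
lemma qinf_pow_char (p : ℕ) [hp : Fact p.Prime] [CharP K p] (s : K) (hs : s ^ p = s) (a : ℕ) {m : ℕ}
    (hm : 0 < m) : qinf s a m ^ p = qinf s (p * a) (p * m) := by
  have hp0 := hp.out.pos
  have : CharP K⟦X⟧ p := charP_of_injective_ringHom (f := C (R := K)) C_injective p
  refine eq_of_forall_X_pow_dvd fun n => ?_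
  have h1 := (X_pow_dvd_qinf_sub_qfin s a hm (le_refl n)).trans (sub_dvd_pow_sub_pow _ _ p)
  have h2 := X_pow_dvd_qinf_sub_qfin s (p * a) (m := p * m) (by positivity) (le_refl n)
  have h3 : qfin s a m n ^ p = qfin s (p * a) (p * m) n := by
    simp only [qfin, ← Finset.prod_pow, add_pow_char, one_pow, mul_pow, ← map_pow, hs]
    refine Finset.prod_congr rfl fun i _ => ?_
    ring
  rw [h3] at h1
  simpa using dvd_sub h1 h2

end Products

/-! ### The Jacobi triple product for power series -/

section Triple

variable {K : Type*} [Field K]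

/-- The term of index `k` of the theta series with `a = s X ^ i`, `b = s X ^ j`. -/
noncomputable def thetaTerm (s : K) (i j : ℕ) (k : ℤ) : K⟦X⟧ :=
  term (C s * X ^ i) (C s * X ^ j) k

lemma X_pow_dvd_thetaTerm (s : K) {i j : ℕ} (hi : 0 < i) (hj : 0 < j) {D : ℕ} {k : ℤ}
    (hk : (D : ℤ) ≤ |k|) : X ^ D ∣ thetaTerm s i j k := by
  have h1 := tri_mul_two k
  have h2 := tri_pred k
  have h3 : D ≤ tri k + tri (k - 1) := by
    have : (D : ℤ) ≤ tri k + tri (k - 1) := by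
      have : |k| ≤ |k| * |k| := by
        rcases eq_or_ne k 0 with rfl | h
        · simp
        · have := Int.one_le_abs h
          nlinarith
      rw [abs_mul_abs_self] at this
      linarith
    exact_mod_cast this
  have h4 : D ≤ i * tri k + j * tri (k - 1) := by nlinarith
  rw [thetaTerm, term, mul_pow, mul_pow, ← pow_mul, ← pow_mul,
    mul_mul_mul_comm, ← pow_add (X : K⟦X⟧)]
  exact (pow_dvd_pow _ h4).mul_left _

lemma poch_eq_qfin (c n : ℕ) : poch ((X : K⟦X⟧) ^ c) n = qfin (-1) c c n := by
  refine Finset.prod_congr rfl fun i _ => ?_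
  rw [map_neg, map_one, ← pow_mul]
  ring

lemma constantCoeff_poch {c : ℕ} (hc : 0 < c) (n : ℕ) :
    constantCoeff (poch ((X : K⟦X⟧) ^ c) n) = 1 := by
  simp [poch, map_prod, hc.ne']

lemma poch_ne_zero {c : ℕ} (hc : 0 < c) (n : ℕ) : poch ((X : K⟦X⟧) ^ c) n ≠ 0 := fun h => by
  have := constantCoeff_poch (K := K) hc n
  simp [h] at this

lemma X_pow_dvd_poch_sub {c : ℕ} (hc : 0 < c) {D n : ℕ} (h : D ≤ n) :
    (X : K⟦X⟧) ^ D ∣ poch (X ^ c) n - poch (X ^ c) D := by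
  obtain ⟨t, rfl⟩ := Nat.exists_eq_add_of_le h
  rw [poch, poch, Finset.prod_range_add, ← mul_sub_one]
  refine (X_pow_dvd_prod_sub_one _ D _ fun i _ => ?_).mul_left _
  rw [← pow_mul, sub_sub_cancel_left, dvd_neg]
  exact pow_dvd_pow _ (by nlinarith)

/-- Far from the boundary, the Gaussian binomial `[i + j; i]` in base `Q = X ^ c` approximates
`1 / ((1 - Q)(1 - Q ^ 2) ⋯)`. -/
lemma X_pow_dvd_poch_mul_gauss {c : ℕ} (hc : 0 < c) {D i j : ℕ} (hi : D ≤ i) (hj : D ≤ j) :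
    (X : K⟦X⟧) ^ D ∣ poch (X ^ c) D * gauss (X ^ c) i j - 1 := by
  have h := gauss_mul_poch ((X : K⟦X⟧) ^ c) i j
  have h1 := dvd_mul_sub_mul' (dvd_mul_sub_mul'
    (show (X : K⟦X⟧) ^ D ∣ gauss (X ^ c) i j - gauss (X ^ c) i j by simp)
    (X_pow_dvd_poch_sub hc hi)) (X_pow_dvd_poch_sub hc hj)
  rw [h] at h1
  have h2 := dvd_sub (X_pow_dvd_poch_sub (K := K) hc (by omega : D ≤ i + j)) h1
  have hu : IsUnit (poch ((X : K⟦X⟧) ^ c) D) := by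
    rw [isUnit_iff_constantCoeff, constantCoeff_poch hc]
    exact isUnit_one
  rw [← hu.dvd_mul_left]
  convert h2 using 1
  ring

variable [TopologicalSpace K] [DiscreteTopology K]

/-- The product side of the Jacobi triple product with `a = s X ^ i`, `b = s X ^ j`, `s ^ 2 = 1`. -/
noncomputable def theta (s : K) (i j : ℕ) : K⟦X⟧ :=
  qinf s i (i + j) * qinf s j (i + j) * qinf (-1) (i + j) (i + j)

/-- The Jacobi triple product. -/
lemma hasSum_theta (s : K) (hs : s * s = 1) {i j : ℕ} (hi : 0 < i) (hj : 0 < j) :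
    HasSum (thetaTerm s i j) (theta s i j) := by
  rw [WithPiTopology.hasSum_iff_hasSum_coeff]
  intro d
  set D := d + 1 with hD
  set n := 2 * D with hn
  have hinj : Function.Injective fun t : ℕ => (t : ℤ) - n := fun x y h => by
    simpa using h
  have key : coeff d (theta s i j) =
      ∑ k ∈ (Finset.range (n + n + 1)).image (fun t : ℕ => (t : ℤ) - n),
        coeff d (thetaTerm s i j k) := by
    rw [Finset.sum_image hinj.injOn, ← map_sum]
    have hab : (C s * X ^ i) * (C s * X ^ j) = (X : K⟦X⟧) ^ (i + j) := by
      rw [mul_mul_mul_comm, ← map_mul, hs, map_one, one_mul, pow_add]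
    have hfin := finite_triple (C s * X ^ i : K⟦X⟧) (C s * X ^ j)
      (by rw [hab]; exact poch_ne_zero (by omega)) n n
    rw [hab, Finset.Nat.sum_antidiagonal_eq_sum_range_succ_mk] at hfin
    have e : ∀ r : ℕ, ∏ t ∈ Finset.range n, (1 + C s * X ^ r * ((X : K⟦X⟧) ^ (i + j)) ^ t) =
        qfin s r (i + j) n := fun r => Finset.prod_congr rfl fun t _ => by
      rw [← pow_mul, mul_assoc, ← pow_add]
    rw [e, e] at hfin
    have h1 := dvd_mul_sub_mul' (dvd_mul_sub_mul'
      (X_pow_dvd_qinf_sub_qfin s i (m := i + j) (by omega) (by omega : D ≤ n))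
      (X_pow_dvd_qinf_sub_qfin s j (m := i + j) (by omega) (by omega : D ≤ n)))
      (X_pow_dvd_qinf_sub_qfin (-1) (i + j) (m := i + j) (by omega) (le_refl D))
    rw [hfin, ← poch_eq_qfin] at h1
    have h2 : (X : K⟦X⟧) ^ D ∣ (∑ k ∈ Finset.range (n + n + 1),
        gauss (X ^ (i + j)) k (n + n - k) * term (C s * X ^ i) (C s * X ^ j) ((k : ℤ) - n)) *
        poch (X ^ (i + j)) D - ∑ k ∈ Finset.range (n + n + 1), thetaTerm s i j ((k : ℤ) - n) := by
      rw [Finset.sum_mul, ← Finset.sum_sub_distrib]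
      refine Finset.dvd_sum fun k hk => ?_
      rw [Finset.mem_range] at hk
      have : gauss (X ^ (i + j)) k (n + n - k) * term (C s * X ^ i) (C s * X ^ j) ((k : ℤ) - n) *
          poch (X ^ (i + j)) D - thetaTerm s i j ((k : ℤ) - n) =
          (poch ((X : K⟦X⟧) ^ (i + j)) D * gauss (X ^ (i + j)) k (n + n - k) - 1) *
          thetaTerm s i j ((k : ℤ) - n) := by
        rw [thetaTerm]; ring
      rw [this]
      -- The Gaussian binomial is close to its limit for central `k`, and the theta term is
      -- small for the others, which have `|k - n| ≥ D` because `n = 2 D`.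
      by_cases hmid : D ≤ k ∧ D ≤ n + n - k
      · exact (X_pow_dvd_poch_mul_gauss (by omega) hmid.1 hmid.2).mul_right _
      · refine (X_pow_dvd_thetaTerm s hi hj ?_).mul_left _
        rw [le_abs]
        omega
    have h3 := dvd_add h1 h2
    rw [sub_add_sub_cancel] at h3
    have := X_pow_dvd_iff.mp h3 d (by omega)
    rwa [map_sub, sub_eq_zero] at this
  rw [key]
  refine hasSum_sum_of_ne_finset_zero fun k hk => ?_
  refine X_pow_dvd_iff.mp (X_pow_dvd_thetaTerm s hi hj (D := D) ?_) d (by omega)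
  by_contra hlt
  rw [not_le, abs_lt] at hlt
  refine hk (Finset.mem_image.mpr ⟨(k + n).toNat, ?_, ?_⟩)
  · rw [Finset.mem_range]; omega
  · omega

lemma theta_expand (s : K) (i : ℕ) {j : ℕ} (hj : 0 < j) (p : ℕ) (hp : p ≠ 0) :
    expand p hp (theta s i j) = theta s (p * i) (p * j) := by
  simp only [theta, map_mul, ← mul_add, qinf_expand _ _ (by omega : 0 < i + j)]

end Triple

/-! ### Theta functions as eta quotients, and their 3-dissections -/

section Theta

variable {K : Type*} [Field K] [TopologicalSpace K] [DiscreteTopology K]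

/-- The Euler product `f_n = ∏ (1 - X ^ (n i))` over `i ≥ 1`. -/
noncomputable def eul (K : Type*) [Field K] [TopologicalSpace K] (n : ℕ) : K⟦X⟧ :=
  qinf (-1) n n

lemma eul_ne_zero {n : ℕ} (hn : 0 < n) : eul K n ≠ 0 := qinf_ne_zero _ hn hn

lemma eul_expand {n : ℕ} (hn : 0 < n) (p : ℕ) (hp : p ≠ 0) :
    expand p hp (eul K n) = eul K (p * n) := qinf_expand _ _ hn p hp

lemma odd_mul_eul {n : ℕ} (hn : 0 < n) : qinf (-1) n (2 * n) * eul K (2 * n) = eul K n := by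
  have := qinf_split_two (-1 : K) n hn
  rw [← two_mul] at this
  exact this.symm

/-- `φ(-q) = f_1 ^ 2 / f_2`. -/
lemma theta_phi {n : ℕ} (hn : 0 < n) : theta (-1) n n * eul K (2 * n) = eul K n ^ 2 := by
  rw [← odd_mul_eul hn, theta, ← two_mul, eul]
  ring

/-- `Ω(-q) = f_1 f_6 ^ 2 / (f_2 f_3)`, with `Ω(-q) = ∑ (-1)^k q^(3k²+2k)`. -/
lemma theta_omega {n : ℕ} (hn : 0 < n) :
    theta (-1) n (5 * n) * eul K (2 * n) * eul K (3 * n) = eul K n * eul K (6 * n) ^ 2 := by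
  have h1 := qinf_split_three (-1 : K) n hn
  have h2 := qinf_split_two (-1 : K) n (m := 3 * n) (by omega)
  have h3 := qinf_split_two (-1 : K) (n + n) (m := 3 * n) (by omega)
  have h4 := qinf_split_two (-1 : K) (n + 2 * n) (m := 3 * n) (by omega)
  have h5 := qinf_split_three (-1 : K) (2 * n) (m := 2 * n) (by omega)
  rw [show n + n = 2 * n by ring] at h1 h3
  rw [show n + 2 * n = 3 * n by ring] at h1 h4
  rw [show n + 3 * n = 4 * n by ring] at h2
  rw [show 2 * n + 3 * n = 5 * n by ring] at h3
  rw [show 3 * n + 3 * n = 6 * n by ring] at h4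
  rw [show 2 * n + 2 * n = 4 * n by ring, show 2 * n + 2 * (2 * n) = 6 * n by ring] at h5
  rw [show 2 * (3 * n) = 6 * n by ring] at h2 h3 h4
  rw [show 3 * (2 * n) = 6 * n by ring] at h5
  simp only [theta, eul]
  rw [show n + 5 * n = 6 * n by ring, h1, h2, h3, h4, h5]
  ring

/-- `ψ(q) = f_2 ^ 2 / f_1`. -/
lemma theta_psi {n : ℕ} (hn : 0 < n) : theta 1 n (3 * n) * eul K n = eul K (2 * n) ^ 2 := by
  have h1 := qinf_split_two (1 : K) n (m := 2 * n) (by omega)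
  have h2 := qinf_one_mul_neg_one (K := K) n (m := 2 * n) (by omega)
  have h3 := odd_mul_eul (K := K) hn
  have h4 := odd_mul_eul (K := K) (n := 2 * n) (by omega)
  rw [show n + 2 * n = 3 * n by ring] at h1
  rw [show 2 * (2 * n) = 4 * n by ring] at h1 h2 h4
  rw [theta, show n + 3 * n = 4 * n by ring, ← h1, ← h3, ← eul]
  calc _ = qinf 1 n (2 * n) * qinf (-1) n (2 * n) * eul K (4 * n) * eul K (2 * n) := by ring
    _ = _ := by rw [h2, h4]; ring

/-- `A(q) = f_2 f_3 ^ 2 / (f_1 f_6)`, with `A(q) = ∑ q^(k(3k+1)/2)`. -/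
lemma theta_A {n : ℕ} (hn : 0 < n) :
    theta 1 n (2 * n) * eul K n * eul K (6 * n) = eul K (2 * n) * eul K (3 * n) ^ 2 := by
  have h1 := qinf_split_three (-1 : K) n hn
  have h2 := qinf_one_mul_neg_one (K := K) n (m := 3 * n) (by omega)
  have h3 := qinf_one_mul_neg_one (K := K) (2 * n) (m := 3 * n) (by omega)
  have h5 := qinf_split_three (-1 : K) (2 * n) (m := 2 * n) (by omega)
  rw [show n + n = 2 * n by ring, show n + 2 * n = 3 * n by ring] at h1
  rw [show 2 * (2 * n) = 4 * n by ring] at h3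
  rw [show 2 * n + 2 * n = 4 * n by ring, show 2 * n + 2 * (2 * n) = 6 * n by ring,
    show 3 * (2 * n) = 6 * n by ring] at h5
  rw [show 2 * (3 * n) = 6 * n by ring] at h2 h3
  simp only [theta, eul]
  rw [show n + 2 * n = 3 * n by ring, h1, h5, ← h2, ← h3]
  ring

omit [TopologicalSpace K] [DiscreteTopology K] in
lemma thetaTerm_one (i j : ℕ) (k : ℤ) :
    thetaTerm (1 : K) i j k = X ^ (i * tri k + j * tri (k - 1)) := by
  simp only [thetaTerm, term, map_one, one_mul]
  ring

omit [TopologicalSpace K] [DiscreteTopology K] in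
lemma thetaTerm_neg_one (i j : ℕ) (k : ℤ) :
    thetaTerm (-1 : K) i j k =
      (if Even k then 1 else -1) * X ^ (i * tri k + j * tri (k - 1)) := by
  have h : ((-1 : K⟦X⟧) ^ (tri k + tri (k - 1))) = if Even k then 1 else -1 := by
    have h2 := tri_pred k
    split_ifs with hk
    · refine Even.neg_one_pow ?_
      rw [Int.even_iff] at hk
      rw [Nat.even_iff]
      omega
    · refine Odd.neg_one_pow ?_
      rw [Int.even_iff] at hk
      rw [Nat.odd_iff]
      omega
  rw [← h]
  simp only [thetaTerm, term, map_one, map_neg]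
  rw [mul_pow, mul_pow]
  ring

lemma hasSum_of_two {M : Type*} [AddCommMonoid M] [TopologicalSpace M] [ContinuousAdd M]
    {f : ℤ → M} {g h : ℤ → ℤ} (hg : g.Injective) (hh : h.Injective)
    (hd : ∀ x y, g x ≠ h y) (hc : ∀ z, (∃ x, g x = z) ∨ ∃ y, h y = z) {a b : M}
    (ha : HasSum (f ∘ g) a) (hb : HasSum (f ∘ h) b) : HasSum f (a + b) := by
  have hcompl : IsCompl (Set.range g) (Set.range h) := by
    refine ⟨Set.disjoint_left.mpr ?_, ?_⟩
    · rintro _ ⟨x, rfl⟩ ⟨y, hy⟩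
      exact hd x y hy.symm
    · rw [codisjoint_iff]
      ext z
      simpa using hc z
  exact (hg.hasSum_range_iff.mpr ha).add_isCompl hcompl (hh.hasSum_range_iff.mpr hb)

/-- `ψ(q) = A(q³) + q ψ(q⁹)`. -/
lemma psi_dissect : theta (1 : K) 1 3 = theta 1 3 6 + X * theta 1 9 27 := by
  refine (hasSum_theta (1 : K) (by ring) one_pos (by norm_num : 0 < 3)).unique ?_
  -- `2 k² - k` with `k = 3 N / 2` or `k = (1 - 3 N) / 2`, according to the parity of `N`,
  -- equals `(9 N² - 3 N) / 2`; these `k` are exactly those not congruent to `1` modulo `3`.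
  refine hasSum_of_two (g := fun N => if N % 2 = 0 then 3 * (N / 2) else (1 - 3 * N) / 2)
    (h := fun m => 1 - 3 * m) ?_ ?_ ?_ ?_ ?_ ?_
  · intro x y hxy
    simp only at hxy
    split_ifs at hxy <;> omega
  · intro x y hxy
    simp only at hxy
    omega
  · intro x y hxy
    split_ifs at hxy <;> omega
  · intro z
    rcases (by omega : z % 3 = 0 ∨ z % 3 = 1 ∨ z % 3 = 2) with h | h | h
    · refine Or.inl ⟨2 * (z / 3), ?_⟩
      split_ifs <;> omega
    · exact Or.inr ⟨(1 - z) / 3, by omega⟩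
    · refine Or.inl ⟨(1 - 2 * z) / 3, ?_⟩
      split_ifs <;> omega
  · convert hasSum_theta (1 : K) (by ring) (by norm_num : 0 < 3) (by norm_num : 0 < 6) using 1
    ext1 N
    simp only [Function.comp_apply, thetaTerm_one]
    congr 1
    have h1 := tri_mul_two N
    have h2 := tri_pred N
    zify
    split_ifs with h
    · obtain ⟨m, rfl⟩ : ∃ m, N = 2 * m := ⟨N / 2, by omega⟩
      rw [show 2 * m / 2 = m by omega]
      have h3 := tri_mul_two (3 * m)
      have h4 := tri_pred (3 * m)
      linarith
    · obtain ⟨m, rfl⟩ : ∃ m, N = 2 * m + 1 := ⟨N / 2, by omega⟩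
      rw [show (1 - 3 * (2 * m + 1)) / 2 = -3 * m - 1 by omega]
      have h3 := tri_mul_two (-3 * m - 1)
      have h4 := tri_pred (-3 * m - 1)
      linarith
  · refine Eq.mpr (congrArg (HasSum · _) (funext fun m => ?_)) ((hasSum_theta (1 : K) (by ring)
      (by norm_num : 0 < 9) (by norm_num : 0 < 27)).mul_left X)
    simp only [Function.comp_apply, thetaTerm_one, ← pow_succ']
    congr 1
    have h1 := tri_mul_two m
    have h2 := tri_pred m
    have h3 := tri_mul_two (1 - 3 * m)
    have h4 := tri_pred (1 - 3 * m)
    zify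
    linarith

/-- `φ(-q) = φ(-q⁹) - 2 q Ω(-q³)`. -/
lemma phi_dissect : theta (-1 : K) 1 1 = theta (-1) 9 9 - 2 * X * theta (-1) 3 15 := by
  refine (hasSum_theta (-1 : K) (by ring) one_pos one_pos).unique ?_
  have hO := hasSum_theta (-1 : K) (by ring) (by norm_num : 0 < 3) (by norm_num : 0 < 15)
  -- The indices `3 m` give `φ(-q⁹)`, and each class `± 1` modulo `3` gives `- q Ω(-q³)`.
  rw [show theta (-1 : K) 9 9 - 2 * X * theta (-1) 3 15 =
    theta (-1 : K) 9 9 + (-X * theta (-1) 3 15 + -X * theta (-1) 3 15) by ring]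
  have hfirst : HasSum ((fun k => thetaTerm (-1 : K) 1 1 k) ∘ fun m => 3 * m)
      (theta (-1) 9 9) := by
    convert hasSum_theta (-1 : K) (by ring) (by norm_num : 0 < 9) (by norm_num : 0 < 9) using 1
    ext1 m
    simp only [Function.comp_apply, thetaTerm_neg_one]
    congr 1
    · simp [Int.even_mul, show ¬ Even (3 : ℤ) by decide]
    · congr 1
      have h1 := tri_mul_two m
      have h2 := tri_pred m
      have h3 := tri_mul_two (3 * m)
      have h4 := tri_pred (3 * m)
      zify
      linarith
  have hside : ∀ e : ℤ, e = 1 ∨ e = -1 →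
      HasSum (fun m => thetaTerm (-1 : K) 1 1 (e * (3 * m - 1))) (-X * theta (-1) 3 15) := by
    intro e he
    refine Eq.mpr (congrArg (HasSum · _) (funext fun m => ?_)) (hO.mul_left (-X))
    simp only [thetaTerm_neg_one]
    have hsign : (if Even (e * (3 * m - 1)) then (1 : K⟦X⟧) else -1) =
        -(if Even m then 1 else -1) := by
      have : Even (e * (3 * m - 1)) ↔ ¬ Even m := by
        rcases he with rfl | rfl <;> simp only [Int.even_iff] <;> omega
      by_cases hm : Even m <;> simp [this, hm]
    have hexp : 1 * tri (e * (3 * m - 1)) + 1 * tri (e * (3 * m - 1) - 1) =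
        3 * tri m + 15 * tri (m - 1) + 1 := by
      have h1 := tri_mul_two m
      have h2 := tri_pred m
      have h3 := tri_mul_two (e * (3 * m - 1))
      have h4 := tri_pred (e * (3 * m - 1))
      zify
      rcases he with rfl | rfl <;> linarith
    rw [hsign, hexp, pow_succ]
    ring
  have h1 := hside 1 (Or.inl rfl)
  have h2 := hside (-1) (Or.inr rfl)
  -- The two side classes together are enumerated by the integers through the parity of the index.
  have hsplit : HasSum ((fun k => thetaTerm (-1 : K) 1 1 k) ∘
      fun N => if N % 2 = 0 then 1 * (3 * (N / 2) - 1) else -1 * (3 * (N / 2) - 1))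
      (-X * theta (-1) 3 15 + -X * theta (-1) 3 15) := by
    refine hasSum_of_two (g := fun m => 2 * m) (h := fun m => 2 * m + 1)
      (fun x y h => by simpa using h) (fun x y h => by simpa using h) (fun x y => by omega)
      (fun z => ?_) ?_ ?_
    · rcases Int.even_or_odd' z with ⟨m, h | h⟩
      · exact Or.inl ⟨m, h.symm⟩
      · exact Or.inr ⟨m, h.symm⟩
    · convert h1 using 1
      ext1 m
      simp
    · convert h2 using 1
      ext1 m
      have e2 : (2 * m + 1) / 2 = m := by omega
      simp [e2]
  refine hasSum_of_two (g := fun m => 3 * m) (fun x y h => by simpa using h) ?_ ?_ ?_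
    hfirst hsplit
  · intro x y hxy
    simp only at hxy
    split_ifs at hxy <;> omega
  · intro x y hxy
    split_ifs at hxy <;> omega
  · intro z
    rcases (by omega : z % 3 = 0 ∨ z % 3 = 1 ∨ z % 3 = 2) with h | h | h
    · exact Or.inl ⟨z / 3, by omega⟩
    · refine Or.inr ⟨2 * ((1 - z) / 3) + 1, ?_⟩
      split_ifs <;> omega
    · refine Or.inr ⟨2 * ((z + 1) / 3), ?_⟩
      split_ifs <;> omega

end Theta

/-! ### The generating function -/

section GenFun

variable (K : Type*) [Field K]

/-- The generating function of `pond`, with coefficients in `K`. -/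
noncomputable def pondSeries : K⟦X⟧ := PowerSeries.mk fun n => (pond n : K)

lemma pondSeries_eq_genFun :
    pondSeries K = Nat.Partition.genFun fun i c => if Odd i ∧ c = 1 then 0 else 1 := by
  classical
  ext n
  rw [pondSeries, coeff_mk, Nat.Partition.coeff_genFun, pond, Nat.card_eq_fintype_card,
    Fintype.card_subtype, Finset.card_filter, Nat.cast_sum]
  refine Finset.sum_congr rfl fun p _ => ?_
  have e : ∀ i c : ℕ, (if Odd i ∧ c = 1 then (0 : K) else 1) =
    if ¬ (Odd i ∧ c = 1) then 1 else 0 := fun i c => by rw [ite_not]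
  simp only [e, Finsupp.prod, Finset.prod_boole, Nat.cast_ite, Nat.cast_one, Nat.cast_zero]
  congr 1
  simp only [eq_iff_iff, Multiset.toFinsupp_support, Multiset.mem_toFinset,
    Multiset.toFinsupp_apply]
  refine forall₂_congr fun k hk => ?_
  have := Multiset.count_pos.mpr hk
  rw [not_and]
  refine imp_congr_right fun _ => ?_
  omega

variable [TopologicalSpace K] [DiscreteTopology K]

lemma factor_even {a : ℕ} (ha : 0 < a) (h : ¬ Odd a) :
    (1 + ∑' j : ℕ, (if Odd a ∧ j + 1 = 1 then (0 : K) else 1) • X ^ (a * (j + 1))) *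
      (1 - X ^ a) = (1 : K⟦X⟧) := by
  have hc : constantCoeff ((X : K⟦X⟧) ^ a) = 0 := by simp [ha.ne']
  have h1 := WithPiTopology.tsum_pow_mul_one_sub_of_constantCoeff_eq_zero hc
  rw [(WithPiTopology.summable_pow_of_constantCoeff_eq_zero hc).tsum_eq_zero_add] at h1
  simpa [h, pow_mul] using h1

lemma factor_odd {a : ℕ} (ha : 0 < a) (h : Odd a) :
    (1 + ∑' j : ℕ, (if Odd a ∧ j + 1 = 1 then (0 : K) else 1) • X ^ (a * (j + 1))) *
      (1 - X ^ (2 * a)) = (1 + X ^ (3 * a) : K⟦X⟧) := by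
  have hc : constantCoeff ((X : K⟦X⟧) ^ a) = 0 := by simp [ha.ne']
  have h1 := WithPiTopology.tsum_pow_mul_one_sub_of_constantCoeff_eq_zero hc
  have h2 := (WithPiTopology.summable_pow_of_constantCoeff_eq_zero hc).hasSum.sub
    (hasSum_ite_eq 1 ((X : K⟦X⟧) ^ a))
  have h3 := h2.summable.tsum_eq_zero_add
  rw [h2.tsum_eq] at h3
  have e : ∀ j : ℕ, (if Odd a ∧ j + 1 = 1 then (0 : K) else 1) • (X : K⟦X⟧) ^ (a * (j + 1)) =
      (X ^ a) ^ (j + 1) - if j + 1 = 1 then X ^ a else 0 := fun j => by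
    by_cases hj : j = 0
    · simp [h, hj]
    · simp [hj, pow_mul]
  simp only [e]
  rw [pow_zero, if_neg zero_ne_one, sub_zero] at h3
  rw [← h3]
  calc _ = ((∑' i : ℕ, ((X : K⟦X⟧) ^ a) ^ i) * (1 - X ^ a)) * (1 + X ^ a)
        - X ^ a * (1 - X ^ (2 * a)) := by ring
    _ = _ := by rw [h1]; ring

/-- The generating function of `pond` is `(-q³; q⁶) / ((q²; q⁴) (q²; q²))`: an odd part `k`
contributes `1 + q^{2k} / (1 - q^k) = (1 + q^{3k}) / (1 - q^{2k})`. -/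
lemma pondSeries_mul : pondSeries K * (qinf (-1) 2 4 * eul K 2) = qinf 1 3 6 := by
  have h1 := Nat.Partition.hasProd_genFun fun i c => if Odd i ∧ c = 1 then (0 : K) else 1
  rw [← pondSeries_eq_genFun] at h1
  have h2 : HasProd (fun i : ℕ => if Even i then (1 - X ^ (2 * (i + 1)) : K⟦X⟧)
      else 1 - X ^ (i + 1)) (qinf (-1) 2 4 * eul K 2) := by
    refine HasProd.even_mul_odd ?_ ?_
    · refine Eq.mpr (congrArg (HasProd · _) (funext fun k => ?_))
        (multipliable_q (-1 : K) 2 (by norm_num : 0 < 4)).hasProd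
      rw [if_pos (by simp), map_neg, map_one]
      ring
    · refine Eq.mpr (congrArg (HasProd · _) (funext fun k => ?_))
        (multipliable_q (-1 : K) 2 (by norm_num : 0 < 2)).hasProd
      rw [if_neg (by simp), map_neg, map_one]
      ring
  have h3 : HasProd (fun i : ℕ => if Even i then (1 + X ^ (3 * (i + 1)) : K⟦X⟧)
      else 1) (qinf 1 3 6 * 1) := by
    refine HasProd.even_mul_odd ?_ ?_
    · refine Eq.mpr (congrArg (HasProd · _) (funext fun k => ?_))
        (multipliable_q (1 : K) 3 (by norm_num : 0 < 6)).hasProd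
      rw [if_pos (by simp), map_one]
      ring
    · refine Eq.mpr (congrArg (HasProd · _) (funext fun k => ?_)) hasProd_one
      rw [if_neg (by simp)]
  rw [mul_one] at h3
  refine (h1.mul h2).unique (Eq.mpr (congrArg (HasProd · _) (funext fun i => ?_)) h3)
  by_cases hi : Even i
  · simp only [if_pos hi]
    exact factor_odd K (Nat.succ_pos i) hi.add_one
  · simp only [if_neg hi]
    exact factor_even K (Nat.succ_pos i) (by
      rw [Nat.not_even_iff_odd] at hi
      rw [Nat.not_odd_iff_even]
      exact hi.add_one)

end GenFun

/-! ### Extraction of arithmetic progressions modulo 3 -/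

section Extract

variable {K : Type*} [Field K]

/-- The series `∑ F_{3n+r} q^n` extracted from `∑ F_n q^n`. -/
noncomputable def ext3 (r : ℕ) (F : K⟦X⟧) : K⟦X⟧ := PowerSeries.mk fun n => coeff (3 * n + r) F

lemma coeff_ext3 (r n : ℕ) (F : K⟦X⟧) : coeff n (ext3 r F) = coeff (3 * n + r) F := coeff_mk _ _

/-- The substitution `q ↦ q³`. -/
noncomputable def cub (F : K⟦X⟧) : K⟦X⟧ := expand 3 three_ne_zero F

lemma coeff_X_pow_mul_cub (t d : ℕ) (F : K⟦X⟧) :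
    coeff d (X ^ t * cub F) = if t ≤ d ∧ 3 ∣ d - t then coeff ((d - t) / 3) F else 0 := by
  rw [coeff_X_pow_mul', cub, coeff_expand]
  split_ifs <;> first | rfl | (exfalso; tauto)

lemma ext3_dissect (A B D : K⟦X⟧) :
    ext3 0 (cub A + X * cub B + X ^ 2 * cub D) = A ∧
    ext3 1 (cub A + X * cub B + X ^ 2 * cub D) = B ∧
    ext3 2 (cub A + X * cub B + X ^ 2 * cub D) = D := by
  have hA := fun d => coeff_X_pow_mul_cub 0 d A
  have hB := fun d => coeff_X_pow_mul_cub 1 d B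
  simp only [pow_zero, one_mul, pow_one] at hA hB
  refine ⟨?_, ?_, ?_⟩ <;> ext n <;>
    simp only [ext3, coeff_mk, map_add, hA, hB, coeff_X_pow_mul_cub]
  · rw [if_pos (by omega), if_neg (by omega), if_neg (by omega)]
    simp
  · rw [if_neg (by omega), if_pos (by omega), if_neg (by omega)]
    simp
  · rw [if_neg (by omega), if_neg (by omega), if_pos (by omega)]
    simp

lemma eq_dissect (F : K⟦X⟧) :
    F = cub (ext3 0 F) + X * cub (ext3 1 F) + X ^ 2 * cub (ext3 2 F) := by
  ext d
  have hA := coeff_X_pow_mul_cub 0 d (ext3 0 F)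
  have hB := coeff_X_pow_mul_cub 1 d (ext3 1 F)
  simp only [pow_zero, one_mul, pow_one] at hA hB
  have hD := coeff_X_pow_mul_cub 2 d (ext3 2 F)
  simp only [coeff_ext3] at hA hB hD
  rw [map_add, map_add, hA, hB, hD]
  rcases (by omega : d % 3 = 0 ∨ d % 3 = 1 ∨ d % 3 = 2) with h | h | h
  · rw [if_pos (by omega), if_neg (by omega), if_neg (by omega), add_zero, add_zero,
      show 3 * ((d - 0) / 3) + 0 = d by omega]
  · rw [if_neg (by omega), if_pos (by omega), if_neg (by omega), add_zero, zero_add,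
      show 3 * ((d - 1) / 3) + 1 = d by omega]
  · rw [if_neg (by omega), if_neg (by omega), if_pos (by omega), add_zero, zero_add,
      show 3 * ((d - 2) / 3) + 2 = d by omega]

lemma ext3_mul_cub {r : ℕ} (hr : r < 3) (F G : K⟦X⟧) :
    ext3 r (F * cub G) = ext3 r F * G := by
  have h : F * cub G =
      cub (ext3 0 F * G) + X * cub (ext3 1 F * G) + X ^ 2 * cub (ext3 2 F * G) := by
    conv_lhs => rw [eq_dissect F]
    simp only [cub, map_mul]
    ring
  have := ext3_dissect (ext3 0 F * G) (ext3 1 F * G) (ext3 2 F * G)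
  rw [← h] at this
  interval_cases r
  · exact this.1
  · exact this.2.1
  · exact this.2.2

end Extract

/-! ### Parity -/

lemma even_pond (m : ℕ) (hm : ¬ 3 ∣ m) : 2 ∣ pond m := by
  have h1 := pondSeries_mul (ZMod 2)
  have h2 := odd_mul_eul (K := ZMod 2) (n := 2) (by norm_num)
  have h3 := qinf_pow_char 2 (-1 : ZMod 2) (by decide) 2 (by norm_num : 0 < 2)
  norm_num at h2 h3
  -- In characteristic `2`, `(q²; q⁴) (q²; q²) = f_2 ^ 2 / f_4 = 1`.
  have h4 : qinf (-1) 2 4 * eul (ZMod 2) 2 = 1 := by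
    apply mul_right_cancel₀ (eul_ne_zero (K := ZMod 2) (by norm_num : 0 < 4))
    rw [mul_right_comm, h2, ← pow_two, one_mul]
    exact h3
  rw [h4, mul_one] at h1
  have h5 := qinf_expand (1 : ZMod 2) 1 (by norm_num : 0 < 2) 3 (by norm_num)
  norm_num at h5
  have h6 : coeff m (pondSeries (ZMod 2)) = 0 := by
    rw [h1, ← h5]
    exact coeff_expand_of_not_dvd _ _ _ hm
  rw [pondSeries, coeff_mk] at h6
  exact (ZMod.natCast_eq_zero_iff _ _).mp h6

/-! ### The congruences modulo 3 -/

section ModThree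

local notation "k3" => ZMod 3

lemma eul_cube {n : ℕ} (hn : 0 < n) : eul k3 (3 * n) = eul k3 n ^ 3 :=
  (qinf_pow_char 3 (-1 : k3) (by decide) n hn).symm

lemma cub_eul {n : ℕ} (hn : 0 < n) : cub (eul k3 n) = eul k3 (3 * n) := eul_expand hn 3 _

lemma cub_theta (s : k3) (i : ℕ) {j : ℕ} (hj : 0 < j) :
    cub (theta s i j) = theta s (3 * i) (3 * j) := theta_expand s i hj 3 _

/-- `∑ pond(n) q^n ≡ φ(-q²)² / f_3` modulo `3`. -/
lemma pond_mod_three : pondSeries k3 * eul k3 3 = theta (-1) 2 2 ^ 2 := by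
  have h1 := pondSeries_mul k3
  have a1 := odd_mul_eul (K := k3) (n := 2) (by norm_num)
  have a2 := odd_mul_eul (K := k3) (n := 3) (by norm_num)
  have a3 := odd_mul_eul (K := k3) (n := 6) (by norm_num)
  have a4 := qinf_one_mul_neg_one (K := k3) 3 (m := 6) (by norm_num)
  have a5 := theta_phi (K := k3) (n := 2) (by norm_num)
  have c1 := eul_cube (n := 1) (by norm_num)
  have c2 := eul_cube (n := 2) (by norm_num)
  have c4 := eul_cube (n := 4) (by norm_num)
  norm_num at a1 a2 a3 a4 a5 c1 c2 c4
  have n2 := eul_ne_zero (K := k3) (by norm_num : 0 < 2)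
  have n4 := eul_ne_zero (K := k3) (by norm_num : 0 < 4)
  have n6 := eul_ne_zero (K := k3) (by norm_num : 0 < 6)
  have n12 := eul_ne_zero (K := k3) (by norm_num : 0 < 12)
  have hodd : qinf (1 : k3) 3 6 * eul k3 3 * eul k3 12 = eul k3 6 ^ 2 := by
    rw [← a2]
    calc _ = qinf (1 : k3) 3 6 * qinf (-1) 3 6 * eul k3 12 * eul k3 6 := by ring
      _ = _ := by rw [a4, a3]; ring
  have hq : pondSeries k3 * eul k3 2 ^ 2 * eul k3 3 * eul k3 12 = eul k3 4 * eul k3 6 ^ 2 := by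
    rw [← hodd, ← h1]
    nth_rewrite 1 [pow_two, ← a1]
    ring
  apply mul_right_cancel₀ (pow_ne_zero 2 n4)
  apply mul_right_cancel₀ (mul_ne_zero (pow_ne_zero 2 n2) n4)
  calc _ = pondSeries k3 * eul k3 2 ^ 2 * eul k3 3 * eul k3 4 ^ 3 := by ring
    _ = eul k3 4 * (eul k3 2 ^ 3) ^ 2 := by rw [← c4, hq, c2]
    _ = (eul k3 2 ^ 2) ^ 2 * (eul k3 2 ^ 2 * eul k3 4) := by ring
    _ = _ := by rw [← a5]; ring

lemma three_eq_zero : (3 : k3⟦X⟧) = 0 := by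
  have : (3 : k3) = 0 := by decide
  rw [← map_ofNat (C (R := k3)) 3, this, map_zero]

/-- The 3-dissection of `φ(-q²)` in characteristic `3`, where the coefficient `-2` is `1`. -/
lemma phi_two_dissect : theta (-1 : k3) 2 2 = theta (-1) 18 18 + X ^ 2 * theta (-1) 6 30 := by
  have h : theta (-1 : k3) 1 1 = theta (-1) 9 9 + X * theta (-1) 3 15 := by
    rw [phi_dissect]
    linear_combination (-X * theta (-1 : k3) 3 15) * three_eq_zero
  have hd := congrArg (expand 2 two_ne_zero) h
  rw [map_add, map_mul, expand_X, theta_expand _ _ (by norm_num), theta_expand _ _ (by norm_num),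
    theta_expand _ _ (by norm_num)] at hd
  exact hd

lemma phi_sq_dissect : theta (-1 : k3) 2 2 ^ 2 = cub (theta (-1) 6 6 ^ 2) +
    X * cub (X * theta (-1) 2 10 ^ 2) +
    X ^ 2 * cub (theta (-1) 6 6 * theta (-1) 2 10 + theta (-1) 6 6 * theta (-1) 2 10) := by
  have d1 : cub (theta (-1 : k3) 6 6) = theta (-1) 18 18 := cub_theta (-1) 6 (by norm_num)
  have d2 : cub (theta (-1 : k3) 2 10) = theta (-1) 6 30 := cub_theta (-1) 2 (by norm_num)
  have hX : cub (X : k3⟦X⟧) = X ^ 3 := expand_X 3 _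
  have hm : ∀ F G : k3⟦X⟧, cub (F * G) = cub F * cub G := fun F G => map_mul _ F G
  have ha : ∀ F G : k3⟦X⟧, cub (F + G) = cub F + cub G := fun F G => map_add _ F G
  rw [phi_two_dissect, pow_two (theta (-1) 6 6), pow_two (theta (-1) 2 10)]
  simp only [ha, hm, hX, d1, d2]
  ring

/-- `∑ pond(3n+2) q^n ≡ 2 f_6 ψ(q) ψ(q²)` modulo `3`. -/
lemma ext_pond : ext3 2 (pondSeries k3) = 2 * eul k3 6 * (theta 1 1 3 * theta 1 2 6) := by
  have h1 := congrArg (ext3 2) pond_mod_three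
  rw [show eul k3 3 = cub (eul k3 1) from (cub_eul one_pos).symm, ext3_mul_cub (by norm_num),
    phi_sq_dissect, (ext3_dissect _ _ _).2.2] at h1
  have a1 := theta_phi (K := k3) (n := 6) (by norm_num)
  have a2 := theta_omega (K := k3) (n := 2) (by norm_num)
  have a3 := theta_psi (K := k3) (n := 1) (by norm_num)
  have a4 := theta_psi (K := k3) (n := 2) (by norm_num)
  have c4 := eul_cube (n := 4) (by norm_num)
  norm_num at a1 a2 a3 a4 c4
  have n1 := eul_ne_zero (K := k3) (by norm_num : 0 < 1)
  have n2 := eul_ne_zero (K := k3) (by norm_num : 0 < 2)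
  have n4 := eul_ne_zero (K := k3) (by norm_num : 0 < 4)
  have n6 := eul_ne_zero (K := k3) (by norm_num : 0 < 6)
  have n12 := eul_ne_zero (K := k3) (by norm_num : 0 < 12)
  apply mul_right_cancel₀ (mul_ne_zero (mul_ne_zero (mul_ne_zero n1 n4) (mul_ne_zero n6 n12)) n2)
  calc _ = ext3 2 (pondSeries k3) * eul k3 1 * (eul k3 4 * eul k3 6 * eul k3 12 * eul k3 2) := by
        ring
    _ = 2 * (theta (-1) 6 6 * eul k3 12) * (theta (-1) 2 10 * eul k3 4 * eul k3 6) *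
        eul k3 2 := by rw [h1]; ring
    _ = 2 * (eul k3 6 ^ 2) * (eul k3 2 * eul k3 12 ^ 2) * eul k3 2 := by
        rw [a1, a2]
    _ = 2 * (eul k3 6 ^ 2) * eul k3 12 * eul k3 4 * (eul k3 2 ^ 2 * eul k3 4 ^ 2) := by
        rw [pow_two (eul k3 12)]
        nth_rewrite 2 [c4]
        ring
    _ = _ := by rw [← a3, ← a4]; ring

/-- `∑ pond(9n+8) q^n ≡ 2 ψ(q) f_3² f_12² / f_6²` modulo `3`. -/
lemma ext_ext_pond : ext3 2 (ext3 2 (pondSeries k3)) * eul k3 6 ^ 2 =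
    2 * theta 1 1 3 * (eul k3 3 ^ 2 * eul k3 12 ^ 2) := by
  have hd := psi_dissect (K := k3)
  have hd2 := congrArg (expand 2 two_ne_zero) hd
  simp only [map_add, map_mul, expand_X] at hd2
  rw [theta_expand _ _ (by norm_num), theta_expand _ _ (by norm_num),
    theta_expand _ _ (by norm_num)] at hd2
  norm_num at hd2
  have d1 := cub_theta 1 1 (j := 2) (by norm_num)
  have d2 := cub_theta 1 3 (j := 9) (by norm_num)
  have d3 := cub_theta 1 2 (j := 4) (by norm_num)
  have d4 := cub_theta 1 6 (j := 18) (by norm_num)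
  norm_num at d1 d2 d3 d4
  have hprod : theta (1 : k3) 1 3 * theta 1 2 6 =
      cub (theta 1 1 2 * theta 1 2 4 + X * (theta 1 3 9 * theta 1 6 18)) +
      X * cub (theta 1 3 9 * theta 1 2 4) + X ^ 2 * cub (theta 1 1 2 * theta 1 6 18) := by
    have hX : cub (X : k3⟦X⟧) = X ^ 3 := expand_X 3 _
    have hm : ∀ F G : k3⟦X⟧, cub (F * G) = cub F * cub G := fun F G => map_mul _ F G
    have ha : ∀ F G : k3⟦X⟧, cub (F + G) = cub F + cub G := fun F G => map_add _ F G
    simp only [ha, hm, hX, d1, d2, d3, d4]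
    rw [hd2, hd]
    ring
  have h1 := ext_pond
  have e6 : 2 * eul k3 6 = cub (2 * eul k3 2) := by
    have h2 : cub (2 : k3⟦X⟧) = 2 := map_ofNat (expand 3 three_ne_zero) 2
    have hm : ∀ F G : k3⟦X⟧, cub (F * G) = cub F * cub G := fun F G => map_mul _ F G
    rw [hm, h2, cub_eul (by norm_num)]
  rw [e6, mul_comm] at h1
  rw [h1, ext3_mul_cub (by norm_num), hprod, (ext3_dissect _ _ _).2.2]
  have a1 := theta_A (K := k3) (n := 1) (by norm_num)
  have a2 := theta_psi (K := k3) (n := 6) (by norm_num)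
  have a3 := theta_psi (K := k3) (n := 1) (by norm_num)
  norm_num at a1 a2 a3
  apply mul_right_cancel₀ (eul_ne_zero (K := k3) one_pos)
  calc _ = 2 * eul k3 2 * (theta 1 1 2 * eul k3 1 * eul k3 6) * (theta 1 6 18 * eul k3 6) := by ring
    _ = 2 * (eul k3 2 ^ 2) * (eul k3 3 ^ 2 * eul k3 12 ^ 2) := by rw [a1, a2]; ring
    _ = _ := by rw [← a3]; ring

lemma ext_psi : ext3 1 (theta (1 : k3) 1 3) = theta 1 3 9 ∧ ext3 2 (theta (1 : k3) 1 3) = 0 := by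
  have d1 := cub_theta 1 1 (j := 2) (by norm_num)
  have d2 := cub_theta 1 3 (j := 9) (by norm_num)
  norm_num at d1 d2
  have h := ext3_dissect (theta (1 : k3) 1 2) (theta 1 3 9) 0
  have h0 : cub (0 : k3⟦X⟧) = 0 := map_zero (expand 3 three_ne_zero)
  rw [d1, d2, h0, mul_zero, add_zero, ← psi_dissect] at h
  exact h.2

lemma ext_ext_pond' {r : ℕ} (hr : r < 3) : ext3 r (ext3 2 (ext3 2 (pondSeries k3))) * eul k3 2 ^ 2 =
    ext3 r (theta 1 1 3) * (2 * (eul k3 1 ^ 2 * eul k3 4 ^ 2)) := by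
  have hm : ∀ F G : k3⟦X⟧, cub (F * G) = cub F * cub G := fun F G => map_mul _ F G
  have h2 : cub (2 : k3⟦X⟧) = 2 := map_ofNat (expand 3 three_ne_zero) 2
  have h := ext_ext_pond
  have e1 : eul k3 6 ^ 2 = cub (eul k3 2 ^ 2) := by
    rw [pow_two, pow_two, hm, cub_eul (by norm_num)]
  have e2 : 2 * theta 1 1 3 * (eul k3 3 ^ 2 * eul k3 12 ^ 2) =
      theta 1 1 3 * cub (2 * (eul k3 1 ^ 2 * eul k3 4 ^ 2)) := by
    simp only [pow_two, hm, h2, cub_eul (n := 1) (by norm_num),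
      cub_eul (n := 4) (by norm_num)]
    ring
  rw [e1, e2] at h
  have := congrArg (ext3 r) h
  rwa [ext3_mul_cub hr, ext3_mul_cub hr] at this

/-- `pond(27n+26) ≡ 0` modulo `3`. -/
lemma ext_two : ext3 2 (ext3 2 (ext3 2 (pondSeries k3))) = 0 := by
  have h := ext_ext_pond' (r := 2) (by norm_num)
  rw [ext_psi.2, zero_mul] at h
  exact (mul_eq_zero.mp h).resolve_right (pow_ne_zero 2 (eul_ne_zero (by norm_num)))

/-- `pond(27n+17) ≡ pond(3n+2)` modulo `3`. -/
lemma ext_one : ext3 1 (ext3 2 (ext3 2 (pondSeries k3))) = ext3 2 (pondSeries k3) := by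
  have h := ext_ext_pond' (r := 1) (by norm_num)
  rw [ext_psi.1] at h
  have a3 := theta_psi (K := k3) (n := 1) (by norm_num)
  have a4 := theta_psi (K := k3) (n := 2) (by norm_num)
  have a5 := theta_psi (K := k3) (n := 3) (by norm_num)
  have c1 := eul_cube (n := 1) (by norm_num)
  have c2 := eul_cube (n := 2) (by norm_num)
  norm_num at a3 a4 a5 c1 c2
  have n1 := eul_ne_zero (K := k3) (by norm_num : 0 < 1)
  have n2 := eul_ne_zero (K := k3) (by norm_num : 0 < 2)
  apply mul_right_cancel₀ (pow_ne_zero 2 n2)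
  rw [h, ext_pond]
  apply mul_right_cancel₀ (mul_ne_zero n1 n2)
  calc _ = 2 * (theta 1 3 9 * eul k3 1 ^ 3) * eul k3 4 ^ 2 * eul k3 2 := by ring
    _ = 2 * eul k3 6 * (eul k3 2 ^ 3) * eul k3 4 ^ 2 * eul k3 2 := by
        rw [← c1, a5, pow_two (eul k3 6)]
        nth_rewrite 2 [c2]
        ring
    _ = 2 * eul k3 6 * (eul k3 2 ^ 2 * eul k3 4 ^ 2) * eul k3 2 ^ 2 := by ring
    _ = _ := by rw [← a3, ← a4]; ring

lemma pond_base (n : ℕ) : (pond (27 * n + 26) : k3) = 0 := by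
  have h := congrArg (coeff n) ext_two
  simp only [coeff_ext3, pondSeries, coeff_mk, map_zero] at h
  rw [← h]
  congr 2
  ring

lemma pond_step (n : ℕ) : (pond (27 * n + 17) : k3) = pond (3 * n + 2) := by
  have h := congrArg (coeff n) ext_one
  simp only [coeff_ext3, pondSeries, coeff_mk] at h
  rw [← h]
  congr 2
  ring

end ModThree

/-- Write `m_α = 3^(2α+1) n + (23·3^(2α) + 1)/8`. Then `m_1 = 27 n + 26` and `m_{α+1} = 9 m_α - 1`;
moreover `m_α = 3 l + 2`, so that `m_{α+1} = 27 l + 17` and the step `pond_step` applies. -/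
lemma pond_index (α n : ℕ) : 8 ∣ 23 * 3 ^ (2 * (α + 1)) + 1 ∧ ∃ l,
    3 ^ (2 * (α + 1) + 1) * n + (23 * 3 ^ (2 * (α + 1)) + 1) / 8 = 3 * l + 2 ∧
    (pond (3 * l + 2) : ZMod 3) = 0 := by
  induction α with
  | zero =>
    refine ⟨by norm_num, 9 * n + 8, by norm_num; ring, ?_⟩
    rw [show 3 * (9 * n + 8) + 2 = 27 * n + 26 by ring]
    exact pond_base n
  | succ α ih =>
    obtain ⟨hdvd, l, hl, h0⟩ := ih
    have e1 : 3 ^ (2 * (α + 1 + 1)) = 9 * 3 ^ (2 * (α + 1)) := by ring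
    have e2 : 3 ^ (2 * (α + 1 + 1) + 1) * n = 9 * (3 ^ (2 * (α + 1) + 1) * n) := by ring
    rw [e1, e2]
    refine ⟨by omega, 9 * l + 5, by omega, ?_⟩
    rw [show 3 * (9 * l + 5) + 2 = 27 * l + 17 by ring, pond_step, h0]

end PondProof

theorem pond_congruence_family (α n : ℕ) (hα : 1 ≤ α) :
    8 ∣ (23 * 3 ^ (2 * α) + 1) ∧
    pond (3 ^ (2 * α + 1) * n + (23 * 3 ^ (2 * α) + 1) / 8) ≡ 0 [MOD 6] := by
  obtain ⟨β, rfl⟩ := Nat.exists_eq_add_of_le' hα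
  obtain ⟨hdvd, l, hl, h0⟩ := PondProof.pond_index β n
  refine ⟨hdvd, ?_⟩
  rw [hl, Nat.modEq_zero_iff_dvd]
  have h2 : 2 ∣ pond (3 * l + 2) := PondProof.even_pond _ (by omega)
  have h3 : 3 ∣ pond (3 * l + 2) := (ZMod.natCast_eq_zero_iff _ _).mp h0
  omega
end

section
/- For all integers n ≥ 0, ped(3n+1) ≡ −ped(27n+10) (mod 6), i.e., 6 divides ped(3n+1) + ped(27n+10). -/
/-!
Write `T k = k (k + 1) / 2`, `φ(q) = ∑ q ^ (y ^ 2)` over `y : ℤ` and `ψ(q) = ∑ q ^ (T k)` over `k : ℕ`.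
The Euler product of the generating function of `ped`, together with Gauss's product formulas for
`φ` and `ψ`, gives `∑ ped(n) (-q) ^ n = ψ(q) / φ(q)` (`pedSeries_mul_phi`). Gauss's formulas enter
through finite telescoping identities (`shanks_triangular`, `shanks_square`).

Modulo 2, `φ ≡ 1`, so `ped(n)` has the parity of the number of `k` with `T k = n`. Since `T k ≡ 1`
modulo 3 only for `k ≡ 1`, and `T (3 k + 1) = 9 T k + 1`, this number is the same for `m` and
`9 m + 1`; take `m = 3 n + 1`.

Modulo 3, dissecting `ψ / φ = ψ φ ^ 2 / φ ^ 3`, where `φ(q) ^ 3 ≡ φ(q ^ 3)`, gives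
`∑ (-1) ^ (3 n + 1) ped(3 n + 1) q ^ n ≡ 2 φ(q) ψ(q ^ 3)` (`sect_pedSeries`). The right side counts
the pairs of integers `(y, k)` with `y ^ 2 + 3 T k = n`, and `(y, k) ↦ (3 y, 3 k + 1)` identifies the
solutions for `n` with those for `9 n + 3`. As `3 (9 n + 3) + 1 = 27 n + 10` and the signs at
`3 n + 1` and `27 n + 10` are opposite, `ped(3 n + 1) ≡ -ped(27 n + 10)` modulo 3.
-/

open PowerSeries

/-- `ped n` is the number of partitions of `n` in which the even parts are distinct. -/
noncomputable def ped (n : ℕ) : ℕ :=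
  Nat.card {p : n.Partition // ∀ k ∈ p.parts, Even k → p.parts.count k ≤ 1}

/-! ### Finite forms of Gauss's identities -/

/-- Shanks-type finite form of Gauss's identity
`∑ q ^ (s (s + 1) / 2) = ∏ (1 - q ^ (2 k)) / (1 - q ^ (2 k - 1))`: the `s = 0` summand on the right
is the numerator product, all others are divisible by `q ^ (2 n + 1)`. -/
theorem shanks_triangular {R : Type*} [CommRing R] (q : R) (n : ℕ) :
    (∏ k ∈ Finset.range n, (1 - q ^ (2 * k + 1))) *
        ∑ s ∈ Finset.range (2 * n), q ^ (s * (s + 1) / 2) =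
      ∑ s ∈ Finset.range n, q ^ (s * (2 * n + 1)) *
        (∏ k ∈ Finset.Ico s n, (1 - q ^ (2 * k + 2))) *
        ∏ k ∈ Finset.range s, (1 - q ^ (2 * k + 1)) := by
  induction n with
  | zero => simp
  | succ n ih =>
    set b : ℕ → R := fun s => ∏ k ∈ Finset.range s, (1 - q ^ (2 * k + 1)) with hb
    set A : ℕ → R := fun s => ∏ k ∈ Finset.Ico s n, (1 - q ^ (2 * k + 2)) with hA
    have hbs (s : ℕ) : b (s + 1) = b s * (1 - q ^ (2 * s + 1)) := Finset.prod_range_succ _ _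
    have hAs (s : ℕ) (hs : s < n) : A s = (1 - q ^ (2 * s + 2)) * A (s + 1) :=
      Finset.prod_eq_prod_Ico_succ_bot hs _
    -- the telescoping primitive
    set g : ℕ → R := fun s => q ^ (s * (2 * n + 1)) * (1 - q ^ (2 * s)) * A s * b s with hg
    have tel (m : ℕ) (hm : m ≤ n) : ∑ s ∈ Finset.range m,
        (q ^ (s * (2 * (n + 1) + 1)) * (A s * (1 - q ^ (2 * n + 2))) * b s
          - (1 - q ^ (2 * n + 1)) * (q ^ (s * (2 * n + 1)) * A s * b s)) = g m := by
      induction m with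
      | zero => simp [hg]
      | succ m ihm =>
        rw [Finset.sum_range_succ, ihm (by omega)]
        simp only [hg, hbs, hAs m (by omega)]
        ring
    have last := tel n le_rfl
    rw [Finset.sum_sub_distrib, ← Finset.mul_sum, ← ih, sub_eq_iff_eq_add] at last
    have hR : ∑ s ∈ Finset.range (n + 1), q ^ (s * (2 * (n + 1) + 1)) *
        (∏ k ∈ Finset.Ico s (n + 1), (1 - q ^ (2 * k + 2))) * b s =
        ∑ s ∈ Finset.range n,
          q ^ (s * (2 * (n + 1) + 1)) * (A s * (1 - q ^ (2 * n + 2))) * b s +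
        q ^ (n * (2 * (n + 1) + 1)) * (1 - q ^ (2 * n + 2)) * b n := by
      rw [Finset.sum_range_succ]
      congr 1
      · refine Finset.sum_congr rfl fun s hs => ?_
        rw [Finset.prod_Ico_succ_top (Finset.mem_range.mp hs).le]
      · simp
    have hAn1 : A n = 1 := by simp [hA]
    change b (n + 1) * _ = ∑ s ∈ Finset.range (n + 1), _ * _ * b s
    rw [hR, last, hbs, show 2 * (n + 1) = 2 * n + 1 + 1 by ring, Finset.sum_range_succ,
      Finset.sum_range_succ]
    have e1 : 2 * n * (2 * n + 1) / 2 = n * (2 * n + 1) := by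
      rw [mul_assoc]; exact Nat.mul_div_cancel_left _ (by norm_num)
    have e2 : (2 * n + 1) * (2 * n + 1 + 1) / 2 = (2 * n + 1) * (n + 1) := by
      rw [show (2 * n + 1) * (2 * n + 1 + 1) = 2 * ((2 * n + 1) * (n + 1)) by ring]
      exact Nat.mul_div_cancel_left _ (by norm_num)
    rw [e1, e2]
    simp only [hg, hAn1]
    ring

/-- Shanks-type finite form of Gauss's identity
`∑ (-1) ^ j q ^ (j ^ 2) = ∏ (1 - q ^ k) / (1 + q ^ k)`, the sum being over `j : ℤ`: the `s = 0` summand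
on the right is the numerator product, all others are divisible by `q ^ (n + 1)`. -/
theorem shanks_square {R : Type*} [CommRing R] (q : R) (n : ℕ) :
    (∏ k ∈ Finset.range n, (1 + q ^ (k + 1))) *
        (1 + 2 * ∑ j ∈ Finset.range n, (-1) ^ (j + 1) * q ^ ((j + 1) ^ 2)) =
      ∑ s ∈ Finset.range (n + 1), (-1) ^ s * q ^ (s * (n + 1)) *
        (∏ k ∈ Finset.Ico s n, (1 - q ^ (k + 1))) *
        ∏ k ∈ Finset.range s, (1 + q ^ k) := by
  induction n with
  | zero => simp
  | succ n ih =>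
    set b : ℕ → R := fun s => ∏ k ∈ Finset.range s, (1 + q ^ k) with hb
    set A : ℕ → R := fun s => ∏ k ∈ Finset.Ico s n, (1 - q ^ (k + 1)) with hA
    have hbs (s : ℕ) : b (s + 1) = b s * (1 + q ^ s) := Finset.prod_range_succ _ _
    have hAs (s : ℕ) (hs : s < n) : A s = (1 - q ^ (s + 1)) * A (s + 1) :=
      Finset.prod_eq_prod_Ico_succ_bot hs _
    -- the telescoping primitive
    set g : ℕ → R := fun s => (-1) ^ s * q ^ (s * (n + 1)) * (1 - q ^ s) * A s * b s with hg
    have tel (m : ℕ) (hm : m ≤ n) : ∑ s ∈ Finset.range m,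
        ((-1) ^ s * q ^ (s * (n + 1 + 1)) * (A s * (1 - q ^ (n + 1))) * b s
          - (1 + q ^ (n + 1)) * ((-1) ^ s * q ^ (s * (n + 1)) * A s * b s)) = g m := by
      induction m with
      | zero => simp [hg]
      | succ m ihm =>
        rw [Finset.sum_range_succ, ihm (by omega)]
        simp only [hg, hbs, hAs m (by omega)]
        ring
    have last := tel n le_rfl
    have hAn1 : A n = 1 := by simp [hA]
    have hR : ∑ s ∈ Finset.range (n + 1 + 1), (-1) ^ s * q ^ (s * (n + 1 + 1)) *
        (∏ k ∈ Finset.Ico s (n + 1), (1 - q ^ (k + 1))) * b s =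
        ∑ s ∈ Finset.range n,
          (-1) ^ s * q ^ (s * (n + 1 + 1)) * (A s * (1 - q ^ (n + 1))) * b s +
        (-1) ^ n * q ^ (n * (n + 1 + 1)) * (1 - q ^ (n + 1)) * b n +
        (-1) ^ (n + 1) * q ^ ((n + 1) * (n + 1 + 1)) * b (n + 1) := by
      rw [Finset.sum_range_succ, Finset.sum_range_succ]
      congr 1
      · congr 1
        · refine Finset.sum_congr rfl fun s hs => ?_
          rw [Finset.prod_Ico_succ_top (Finset.mem_range.mp hs).le]
        · simp
      · simp
    have hb' : (∏ k ∈ Finset.range n, (1 + q ^ (k + 1))) * 2 = b (n + 1) := by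
      simp only [hb, Finset.prod_range_succ' _ n]; norm_num
    change _ = ∑ s ∈ Finset.range (n + 1), _ * A s * b s at ih
    rw [Finset.sum_range_succ, hAn1] at ih
    change _ = ∑ s ∈ Finset.range (n + 1 + 1), _ * _ * b s
    rw [hR, Finset.prod_range_succ, Finset.sum_range_succ]
    rw [Finset.sum_sub_distrib, ← Finset.mul_sum] at last
    simp only [hg, hAn1] at last
    rw [hbs] at hb' ⊢
    linear_combination (1 + q ^ (n + 1)) * ih - last
      + (1 + q ^ (n + 1)) * (-1) ^ (n + 1) * q ^ ((n + 1) ^ 2) * hb'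

/-! ### Theta series of weight functions -/

/-- The series `∑ a, X ^ w a`, whose `n`-th coefficient counts the `a` of weight `n`. An infinite
fibre contributes the junk value `0`, hence the `FiniteFibres` hypotheses below. -/
noncomputable def thetaSeries {α : Type*} (w : α → ℕ) : ℤ⟦X⟧ :=
  PowerSeries.mk fun n => (Nat.card {a // w a = n} : ℤ)

/-- Every weight is attained finitely often, so that `∑ a, X ^ w a` makes sense. -/
def FiniteFibres {α : Type*} (w : α → ℕ) : Prop := ∀ n, Finite {a // w a = n}

theorem thetaSeries_congr {α β : Type*} {w : α → ℕ} {v : β → ℕ} (e : α ≃ β)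
    (h : ∀ a, v (e a) = w a) : thetaSeries w = thetaSeries v := by
  ext n
  simp only [thetaSeries, coeff_mk]
  congr 1
  exact Nat.card_congr (e.subtypeEquiv fun a => by rw [h])

theorem thetaSeries_sum {α β : Type*} {w : α → ℕ} {v : β → ℕ} (hw : FiniteFibres w)
    (hv : FiniteFibres v) : thetaSeries (Sum.elim w v) = thetaSeries w + thetaSeries v := by
  ext n
  have := hw n
  have := hv n
  simp only [thetaSeries, coeff_mk, map_add]
  rw [← Nat.cast_add, ← Nat.card_sum]
  congr 1
  exact Nat.card_congr (Equiv.subtypeSum (p := fun x => Sum.elim w v x = n))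

theorem thetaSeries_mul {α β : Type*} {w : α → ℕ} {v : β → ℕ} (hw : FiniteFibres w)
    (hv : FiniteFibres v) :
    thetaSeries w * thetaSeries v = thetaSeries fun p : α × β => w p.1 + v p.2 := by
  ext n
  simp only [thetaSeries, coeff_mk, coeff_mul]
  have key : {p : α × β // w p.1 + v p.2 = n} ≃
      Σ ij : Finset.HasAntidiagonal.antidiagonal n, {a // w a = ij.1.1} × {b // v b = ij.1.2} :=
    { toFun := fun p => ⟨⟨(w p.1.1, v p.1.2), by simpa using p.2⟩, ⟨p.1.1, rfl⟩, ⟨p.1.2, rfl⟩⟩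
      invFun := fun x => ⟨(x.2.1.1, x.2.2.1), by
        rw [x.2.1.2, x.2.2.2]; exact Finset.HasAntidiagonal.mem_antidiagonal.mp x.1.2⟩
      left_inv := fun p => rfl
      right_inv := by
        rintro ⟨⟨⟨i, j⟩, h⟩, ⟨a, ha⟩, ⟨b, hb⟩⟩
        obtain rfl : w a = i := ha
        obtain rfl : v b = j := hb
        rfl }
  have hw' (m : ℕ) : Finite {a // w a = m} := hw m
  have hv' (m : ℕ) : Finite {b // v b = m} := hv m
  rw [Nat.card_congr key, Nat.card_sigma]
  simp only [Nat.card_prod]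
  push_cast
  exact (Finset.sum_coe_sort (Finset.HasAntidiagonal.antidiagonal n)
    (fun ij => (Nat.card {a // w a = ij.1} : ℤ) * Nat.card {b // v b = ij.2})).symm

theorem thetaSeries_expand {α : Type*} (w : α → ℕ) (m : ℕ) (hm : m ≠ 0) :
    thetaSeries (fun a => m * w a) = expand m hm (thetaSeries w) := by
  ext n
  rw [coeff_expand]
  split_ifs with h
  · obtain ⟨d, rfl⟩ := h
    rw [Nat.mul_div_cancel_left _ (Nat.pos_of_ne_zero hm)]
    simp [thetaSeries, hm]
  · simp only [thetaSeries, coeff_mk]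
    have : IsEmpty {a // m * w a = n} := ⟨fun a => h ⟨_, a.2.symm⟩⟩
    simp

theorem thetaSeries_X_mul {α : Type*} (w : α → ℕ) :
    thetaSeries (fun a => w a + 1) = X * thetaSeries w := by
  ext n
  cases n with
  | zero => simp [thetaSeries]
  | succ n => simp [thetaSeries, coeff_succ_X_mul]

theorem finiteFibres_of_abs_le {w : ℤ → ℕ} (h : ∀ k, |k| ≤ w k + 1) : FiniteFibres w := fun n =>
  (Set.Finite.subset (Set.finite_Icc (-(n + 1 : ℤ)) (n + 1)) (by
    rintro k rfl
    exact abs_le.mp (h k))).to_subtype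

theorem FiniteFibres.comp {α β : Type*} {w : β → ℕ} (hw : FiniteFibres w) {f : α → β}
    (hf : Function.Injective f) : FiniteFibres (w ∘ f) := fun n => by
  have := hw n
  exact Finite.of_injective (fun a : {a // w (f a) = n} => (⟨f a.1, a.2⟩ : {b // w b = n}))
    fun a b h => Subtype.ext (hf (congrArg Subtype.val h))

theorem FiniteFibres.mul_left {α : Type*} {w : α → ℕ} (hw : FiniteFibres w) {m : ℕ} (hm : m ≠ 0) :
    FiniteFibres fun a => m * w a := fun n => by
  have := hw (n / m)
  refine Finite.of_injective (fun a : {a // m * w a = n} => (⟨a.1, ?_⟩ : {b // w b = n / m}))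
    fun a b h => Subtype.ext (by simpa using h)
  exact (Nat.div_eq_of_eq_mul_right (Nat.pos_of_ne_zero hm) a.2.symm).symm

theorem FiniteFibres.sum {α β : Type*} {w : α → ℕ} {v : β → ℕ} (hw : FiniteFibres w)
    (hv : FiniteFibres v) : FiniteFibres (Sum.elim w v) := fun n => by
  have : Finite {a // Sum.elim w v (Sum.inl a) = n} := hw n
  have : Finite {b // Sum.elim w v (Sum.inr b) = n} := hv n
  exact Finite.of_equiv _ (Equiv.subtypeSum (p := fun x => Sum.elim w v x = n)).symm

theorem FiniteFibres.add {α β : Type*} {w : α → ℕ} {v : β → ℕ} (hw : FiniteFibres w)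
    (hv : FiniteFibres v) : FiniteFibres fun p : α × β => w p.1 + v p.2 := fun n => by
  have h1 : (⋃ i ∈ Set.Iic n, {a | w a = i}).Finite :=
    (Set.finite_Iic n).biUnion fun i _ => @Set.toFinite _ _ (hw i)
  have h2 : (⋃ i ∈ Set.Iic n, {a | v a = i}).Finite :=
    (Set.finite_Iic n).biUnion fun i _ => @Set.toFinite _ _ (hv i)
  refine ((h1.prod h2).subset ?_).to_subtype
  rintro ⟨a, b⟩ rfl
  simp

theorem thetaSeries_trunc {w : ℕ → ℕ} (m n : ℕ)
    (h : ∀ k, n ≤ k → m ≤ w k) :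
    (X : ℤ⟦X⟧) ^ m ∣ thetaSeries w - ∑ k ∈ Finset.range n, X ^ w k := by
  rw [X_pow_dvd_iff]
  intro d hd
  simp only [thetaSeries, map_sub, coeff_mk, map_sum, coeff_X_pow]
  rw [sub_eq_zero, Finset.sum_boole]
  norm_cast
  rw [← Nat.card_eq_fintype_card.trans (Fintype.card_coe _)]
  refine Nat.card_congr (Equiv.subtypeEquivRight fun k => ?_)
  simp only [Finset.mem_filter, Finset.mem_range]
  constructor
  · rintro rfl
    exact ⟨by by_contra hk; exact absurd (h k (by omega)) (by omega), rfl⟩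
  · exact fun h => h.2.symm

/-- `y ^ 2` as a natural number. -/
def sqWeight (y : ℤ) : ℕ := (y ^ 2).toNat

/-- The triangular number `k (k + 1) / 2` of an integer index, as a natural number. -/
def tri (k : ℤ) : ℕ := (k * (k + 1) / 2).toNat

theorem sqWeight_cast (y : ℤ) : (sqWeight y : ℤ) = y ^ 2 := Int.toNat_of_nonneg (sq_nonneg y)

theorem two_mul_tri_cast (k : ℤ) : 2 * (tri k : ℤ) = k * (k + 1) := by
  have h : 0 ≤ k * (k + 1) := by
    rcases le_or_gt 0 k with h | h
    · positivity
    · exact mul_nonneg_of_nonpos_of_nonpos h.le (by omega)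
  rw [tri, Int.toNat_of_nonneg (by omega)]
  exact Int.mul_ediv_cancel' (Int.even_mul_succ_self k).two_dvd

theorem tri_natCast (k : ℕ) : tri k = k * (k + 1) / 2 := by
  have h := two_mul_tri_cast k
  have h' : 2 * tri k = k * (k + 1) := by exact_mod_cast h
  omega

theorem finiteFibres_sqWeight : FiniteFibres sqWeight := finiteFibres_of_abs_le fun k => by
  rw [sqWeight_cast, ← sq_abs]; nlinarith [abs_nonneg k, sq_nonneg (|k| - 1)]

theorem finiteFibres_tri : FiniteFibres tri := finiteFibres_of_abs_le fun k => by
  have h := two_mul_tri_cast k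
  rcases abs_cases k with ⟨h1, h2⟩ | ⟨h1, h2⟩ <;> rw [h1]
  · rcases eq_or_lt_of_le h2 with h3 | h3
    · rw [← h3]; positivity
    · nlinarith
  · rcases eq_or_lt_of_le (show k ≤ -1 by omega) with h3 | h3
    · rw [h3]; norm_num
    · nlinarith

/-- Ramanujan's `φ(q)`: the sum of `q ^ (y ^ 2)` over all integers `y`. -/
noncomputable def phi : ℤ⟦X⟧ := thetaSeries sqWeight

/-- Ramanujan's `ψ(q)`: the sum of `q ^ (k (k + 1) / 2)` over all natural numbers `k`. -/
noncomputable def psi : ℤ⟦X⟧ := thetaSeries fun k : ℕ => tri k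

/-- The sum of `q ^ (k (k + 1) / 2)` over all integers `k`, that is `2 ψ(q)`. Summing over all of `ℤ`
turns identities into bijections of lattices. -/
noncomputable def psiInt : ℤ⟦X⟧ := thetaSeries tri

theorem sqWeight_eq_iff {y : ℤ} {n : ℕ} : sqWeight y = n ↔ y ^ 2 = n := by
  rw [← sqWeight_cast]; norm_cast

theorem tri_eq_iff {k : ℤ} {n : ℕ} : tri k = n ↔ k * (k + 1) = 2 * n := by
  rw [← two_mul_tri_cast]; norm_cast; omega

theorem psiInt_eq : psiInt = 2 * psi := by
  have hf : FiniteFibres fun k : ℕ => tri k :=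
    finiteFibres_tri.comp (f := fun k : ℕ => (k : ℤ)) Nat.cast_injective
  rw [two_mul, psi, ← thetaSeries_sum hf hf, psiInt]
  refine thetaSeries_congr Equiv.intEquivNatSumNat fun k => ?_
  rcases k with k | k
  · rfl
  · change tri (k : ℤ) = tri (Int.negSucc k)
    rw [tri_eq_iff, two_mul_tri_cast, Int.negSucc_eq]
    ring

theorem phi_eq : phi = 1 + 2 * thetaSeries fun y : ℕ => (y + 1) ^ 2 := by
  have hs : ∀ y : ℕ, (y + 1) ^ 2 = sqWeight (y + 1 : ℤ) := fun y => by
    rw [eq_comm, sqWeight_eq_iff]; push_cast; rfl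
  have hf : FiniteFibres fun y : ℕ => (y + 1) ^ 2 := by
    simp_rw [hs]
    exact finiteFibres_sqWeight.comp (f := fun k : ℕ => (k + 1 : ℤ)) fun a b h => by simpa using h
  have h0 : FiniteFibres fun y : ℕ => y ^ 2 := by
    have : ∀ y : ℕ, y ^ 2 = sqWeight (y : ℤ) := fun y => by
      rw [eq_comm, sqWeight_eq_iff]; push_cast; rfl
    simp_rw [this]
    exact finiteFibres_sqWeight.comp (f := fun k : ℕ => (k : ℤ)) Nat.cast_injective
  have h1 : FiniteFibres fun _ : Unit => 0 := fun n => inferInstance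
  have e1 : thetaSeries (fun _ : Unit => 0) = 1 := by
    ext n
    simp only [thetaSeries, coeff_mk, coeff_one]
    split_ifs with h
    · simp [h]
    · have : IsEmpty {a : Unit // 0 = n} := ⟨fun a => h a.2.symm⟩
      simp
  have e2 : thetaSeries (fun y : ℕ => y ^ 2) = 1 + thetaSeries fun y : ℕ => (y + 1) ^ 2 := by
    rw [add_comm, ← e1, ← thetaSeries_sum hf h1]
    refine thetaSeries_congr Equiv.natSumPUnitEquivNat.symm fun y => ?_
    cases y <;> simp [Equiv.natSumPUnitEquivNat, Equiv.natEquivNatSumPUnit]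
  rw [two_mul, ← add_assoc, ← e2, ← thetaSeries_sum h0 hf, phi]
  refine thetaSeries_congr Equiv.intEquivNatSumNat fun k => ?_
  rcases k with k | k
  · change k ^ 2 = sqWeight (k : ℤ)
    rw [eq_comm, sqWeight_eq_iff]; push_cast; rfl
  · change (k + 1) ^ 2 = sqWeight (Int.negSucc k)
    rw [eq_comm, sqWeight_eq_iff, Int.negSucc_eq]; push_cast; ring

/-! ### The generating function of `ped` -/

open scoped PowerSeries.WithPiTopology in
/-- Euler factor of `pedSeries` at the part size `i + 1`, in the form produced by
`Nat.Partition.hasProd_genFun`. -/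
noncomputable def pedFactor (i : ℕ) : ℤ⟦X⟧ :=
  1 + ∑' j, (if Even (i + 1) ∧ 1 < j + 1 then (0 : ℤ) else (-1) ^ ((i + 1) * (j + 1))) •
    (X : ℤ⟦X⟧) ^ ((i + 1) * (j + 1))

/-- The generating function of `ped` evaluated at `-q`; the sign makes it the quotient `ψ(q) / φ(q)`. -/
noncomputable def pedSeries : ℤ⟦X⟧ := PowerSeries.mk fun n => (-1) ^ n * (ped n : ℤ)

theorem pedSeries_eq_genFun : pedSeries = Nat.Partition.genFun
    fun i c => if Even i ∧ 1 < c then (0 : ℤ) else (-1) ^ (i * c) := by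
  classical
  ext n
  rw [pedSeries, coeff_mk, Nat.Partition.coeff_genFun]
  have h (p : n.Partition) : (p.parts.toFinsupp.prod
      fun i c => if Even i ∧ 1 < c then (0 : ℤ) else (-1) ^ (i * c)) =
      (-1) ^ n * if (∀ k ∈ p.parts, Even k → p.parts.count k ≤ 1) then 1 else 0 := by
    simp only [Finsupp.prod, Multiset.toFinsupp_support, Multiset.toFinsupp_apply]
    split_ifs with h
    · rw [Finset.prod_congr rfl (g := fun i => (-1) ^ (i * p.parts.count i)),
        Finset.prod_pow_eq_pow_sum, mul_one]
      · congr 1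
        conv_rhs => rw [← p.parts_sum, Finset.sum_multiset_count]
        exact Finset.sum_congr rfl fun i _ => by rw [smul_eq_mul, mul_comm]
      · intro i hi
        exact if_neg fun hc => hc.2.not_ge (h i (Multiset.mem_toFinset.mp hi) hc.1)
    · push Not at h
      obtain ⟨k, hk, h1, h2⟩ := h
      rw [mul_zero]
      exact Finset.prod_eq_zero (Multiset.mem_toFinset.mpr hk) (if_pos ⟨h1, h2⟩)
  rw [Finset.sum_congr rfl fun p _ => h p, ← Finset.mul_sum, Finset.sum_boole, ped,
    Nat.card_eq_fintype_card, Fintype.card_subtype]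

open scoped PowerSeries.WithPiTopology in
theorem pedFactor_even (k : ℕ) : pedFactor (2 * k + 1) = 1 + X ^ (2 * k + 2) := by
  rw [pedFactor, tsum_eq_single 0]
  · simp [show 2 * k + 1 + 1 = 2 * (k + 1) by ring, pow_mul]
  · intro j hj
    rw [if_pos ⟨⟨k + 1, by ring⟩, by omega⟩, zero_smul]

open scoped PowerSeries.WithPiTopology in
theorem pedFactor_odd (k : ℕ) : (1 + X ^ (2 * k + 1)) * pedFactor (2 * k) = 1 := by
  have h0 : constantCoeff (-(X : ℤ⟦X⟧) ^ (2 * k + 1)) = 0 := by simp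
  have hs := WithPiTopology.summable_pow_of_constantCoeff_eq_zero h0
  have h := WithPiTopology.one_sub_mul_tsum_pow_of_constantCoeff_eq_zero h0
  rw [sub_neg_eq_add, hs.tsum_eq_zero_add, pow_zero] at h
  have e : pedFactor (2 * k) = 1 + ∑' j, (-(X : ℤ⟦X⟧) ^ (2 * k + 1)) ^ (j + 1) := by
    rw [pedFactor]
    congr 1
    refine tsum_congr fun j => ?_
    rw [if_neg (by rintro ⟨h, -⟩; exact absurd h (by simp)), pow_mul, pow_mul,
      Odd.neg_one_pow ⟨k, rfl⟩, neg_pow ((X : ℤ⟦X⟧) ^ (2 * k + 1)), zsmul_eq_mul]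
    simp
  rw [e, h]

theorem prod_pedFactor (N : ℕ) :
    (∏ k ∈ Finset.range N, (1 + (X : ℤ⟦X⟧) ^ (2 * k + 1))) *
      ∏ i ∈ Finset.range (2 * N), pedFactor i =
    ∏ k ∈ Finset.range N, (1 + X ^ (2 * k + 2)) := by
  induction N with
  | zero => simp
  | succ N ih =>
    rw [show 2 * (N + 1) = 2 * N + 1 + 1 by ring]
    simp only [Finset.prod_range_succ]
    rw [← ih, pedFactor_even]
    linear_combination (∏ k ∈ Finset.range N, (1 + (X : ℤ⟦X⟧) ^ (2 * k + 1))) *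
      (∏ i ∈ Finset.range (2 * N), pedFactor i) * (1 + X ^ (2 * N + 2)) * pedFactor_odd N

open scoped PowerSeries.WithPiTopology in
/-- Coefficientwise convergence of the Euler product of `pedSeries`. -/
theorem eventually_coeff_prod_pedFactor (d : ℕ) : ∃ N₀, ∀ N ≥ N₀,
    coeff d (∏ i ∈ Finset.range N, pedFactor i) = coeff d pedSeries := by
  have h := (Nat.Partition.hasProd_genFun
    (fun i c => if Even i ∧ 1 < c then (0 : ℤ) else (-1) ^ (i * c))).tendsto_prod_nat
  rw [← pedSeries_eq_genFun, WithPiTopology.tendsto_iff_coeff_tendsto] at h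
  have := h d
  rw [nhds_discrete, Filter.tendsto_pure, Filter.eventually_atTop] at this
  exact this

theorem prod_range_two_mul {R : Type*} [CommRing R] (f : ℕ → R) (N : ℕ) :
    ∏ k ∈ Finset.range (2 * N), f k =
      (∏ k ∈ Finset.range N, f (2 * k)) * ∏ k ∈ Finset.range N, f (2 * k + 1) := by
  induction N with
  | zero => simp
  | succ N ih =>
    rw [show 2 * (N + 1) = 2 * N + 1 + 1 by ring]
    simp only [Finset.prod_range_succ, ih]
    ring

theorem psi_congr (N : ℕ) : (X : ℤ⟦X⟧) ^ (2 * N) ∣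
    (∏ k ∈ Finset.range N, (1 - X ^ (2 * k + 1))) * psi -
      ∏ k ∈ Finset.range N, (1 - X ^ (2 * k + 2)) := by
  have h1 : (X : ℤ⟦X⟧) ^ (2 * N) ∣ psi - ∑ s ∈ Finset.range (2 * N), X ^ (s * (s + 1) / 2) := by
    have := thetaSeries_trunc (w := fun k : ℕ => tri k) (2 * N) (2 * N) fun k hk => by
      rw [tri_natCast, Nat.le_div_iff_mul_le (by norm_num)]
      rcases k with _ | k <;> nlinarith
    simpa only [tri_natCast, psi] using this
  have h2 : (X : ℤ⟦X⟧) ^ (2 * N) ∣ (∏ k ∈ Finset.range N, (1 - X ^ (2 * k + 1))) *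
      ∑ s ∈ Finset.range (2 * N), X ^ (s * (s + 1) / 2) -
      ∏ k ∈ Finset.range N, (1 - X ^ (2 * k + 2)) := by
    rw [shanks_triangular]
    cases N with
    | zero => simp
    | succ N =>
      rw [Finset.sum_range_succ']
      simp only [zero_mul, pow_zero, one_mul, Finset.range_zero, Finset.prod_empty, mul_one,
        Nat.Ico_zero_eq_range, add_sub_cancel_right]
      refine Finset.dvd_sum fun s _ => ?_
      rw [mul_assoc]
      exact dvd_mul_of_dvd_left (pow_dvd_pow _ (by nlinarith)) _
  have := dvd_add (h1.mul_left (∏ k ∈ Finset.range N, (1 - X ^ (2 * k + 1)))) h2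
  convert this using 1
  ring

theorem phi_congr (n : ℕ) : (X : ℤ⟦X⟧) ^ n ∣
    (∏ k ∈ Finset.range n, (1 + (-X) ^ (k + 1))) * phi -
      ∏ k ∈ Finset.range n, (1 - (-X) ^ (k + 1)) := by
  have h1 : (X : ℤ⟦X⟧) ^ n ∣ phi - (1 + 2 * ∑ j ∈ Finset.range n,
      (-1) ^ (j + 1) * (-X) ^ ((j + 1) ^ 2)) := by
    have := thetaSeries_trunc (w := fun y : ℕ => (y + 1) ^ 2) n n fun k hk => by nlinarith
    rw [phi_eq]
    convert this.mul_left 2 using 1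
    rw [mul_sub, add_sub_add_left_eq_sub]
    congr 2
    refine Finset.sum_congr rfl fun j _ => ?_
    rw [neg_pow (X : ℤ⟦X⟧), ← mul_assoc, ← pow_add, Even.neg_one_pow, one_mul]
    rw [show j + 1 + (j + 1) ^ 2 = (j + 1) * (j + 1 + 1) by ring]
    exact Nat.even_mul_succ_self _
  have h2 : (X : ℤ⟦X⟧) ^ n ∣ (∏ k ∈ Finset.range n, (1 + (-X) ^ (k + 1))) *
      (1 + 2 * ∑ j ∈ Finset.range n, (-1) ^ (j + 1) * (-X) ^ ((j + 1) ^ 2)) -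
      ∏ k ∈ Finset.range n, (1 - (-X) ^ (k + 1)) := by
    rw [shanks_square, Finset.sum_range_succ']
    simp only [zero_mul, pow_zero, one_mul, Finset.range_zero, Finset.prod_empty, mul_one,
        Nat.Ico_zero_eq_range, add_sub_cancel_right]
    refine Finset.dvd_sum fun s _ => ?_
    refine dvd_mul_of_dvd_left (dvd_mul_of_dvd_left (dvd_mul_of_dvd_right ?_ _) _) _
    rw [neg_pow]
    exact dvd_mul_of_dvd_right (pow_dvd_pow _ (by nlinarith)) _
  have := dvd_add (h1.mul_left (∏ k ∈ Finset.range n, (1 + (-X) ^ (k + 1)))) h2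
  convert this using 1
  ring

/-- The generating function of `ped`, with `q` replaced by `-q`, is `ψ(q) / φ(q)`. By the finite
identities both sides agree modulo `X ^ (2 N)` once the Euler product is cut off at `2 N`. -/
theorem pedSeries_mul_phi : pedSeries * phi = psi := by
  have key (N : ℕ) : (X : ℤ⟦X⟧) ^ (2 * N) ∣
      (∏ i ∈ Finset.range (2 * N), pedFactor i) * phi - psi := by
    have h1 := psi_congr N
    have h2 := phi_congr (2 * N)
    have h3 := prod_pedFactor N
    have ev (k : ℕ) : (-X : ℤ⟦X⟧) ^ (2 * k + 1 + 1) = X ^ (2 * k + 2) :=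
      Even.neg_pow ⟨k + 1, by ring⟩ _
    have od (k : ℕ) : (-X : ℤ⟦X⟧) ^ (2 * k + 1) = -X ^ (2 * k + 1) := Odd.neg_pow ⟨k, rfl⟩ _
    simp only [prod_range_two_mul (fun k => 1 + (-X : ℤ⟦X⟧) ^ (k + 1)),
      prod_range_two_mul (fun k => 1 - (-X : ℤ⟦X⟧) ^ (k + 1)), ev, od, sub_neg_eq_add,
      ← sub_eq_add_neg] at h2
    rw [← h3] at h2
    set o := ∏ k ∈ Finset.range N, (1 + (X : ℤ⟦X⟧) ^ (2 * k + 1)) with ho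
    set o' := ∏ k ∈ Finset.range N, (1 - (X : ℤ⟦X⟧) ^ (2 * k + 1)) with ho'
    have hu : IsUnit (o' * o) := by
      rw [isUnit_iff_constantCoeff, ho, ho']
      simp [map_prod]
    rw [← hu.dvd_mul_left]
    convert h2.sub (h1.mul_left o) using 1
    ring
  ext d
  choose N₀ hN₀ using eventually_coeff_prod_pedFactor
  -- all coefficients of index at most `d` have stabilised at `N`
  set N := (∑ i ∈ Finset.range (d + 1), N₀ i) + d + 1 with hN
  have h := X_pow_dvd_iff.mp (key N) d (by omega)
  rw [map_sub, sub_eq_zero] at h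
  rw [← h, coeff_mul, coeff_mul]
  refine Finset.sum_congr rfl fun ij hij => ?_
  rw [hN₀]
  have h1 : ij.1 ∈ Finset.range (d + 1) := by
    have := Finset.HasAntidiagonal.mem_antidiagonal.mp hij
    simp; omega
  have := Finset.single_le_sum (f := N₀) (fun i _ => Nat.zero_le _) h1
  omega

/-! ### Theta function identities -/

/-- The identity `ψ(q) ^ 2 = φ(q) ψ(q ^ 2)`. Splitting the pairs `(k, l)` by the parity of `k + l`
leaves two classes, each parametrised by `(y, m)` with `T k + T l = y ^ 2 + 2 T m`. -/
theorem psiInt_sq : psiInt ^ 2 = 2 * phi * expand 2 two_ne_zero psiInt := by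
  have h2 := finiteFibres_tri.mul_left two_ne_zero
  have hf := finiteFibres_sqWeight.add h2
  rw [mul_assoc, two_mul, pow_two, psiInt, phi, ← thetaSeries_expand,
    thetaSeries_mul finiteFibres_sqWeight h2, ← thetaSeries_sum hf hf,
    thetaSeries_mul finiteFibres_tri finiteFibres_tri, eq_comm]
  let e : (ℤ × ℤ) ⊕ (ℤ × ℤ) → ℤ × ℤ :=
    Sum.elim (fun p => (p.2 + p.1, p.2 - p.1)) (fun p => (p.2 + p.1, p.1 - p.2 - 1))
  have he : Function.Bijective e := by
    constructor
    · rintro (⟨y, m⟩ | ⟨y, m⟩) (⟨y', m'⟩ | ⟨y', m'⟩) h <;>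
        simp only [e, Sum.elim_inl, Sum.elim_inr, Prod.mk.injEq, Sum.inl.injEq, Sum.inr.injEq,
          reduceCtorEq] at h ⊢ <;> omega
    · rintro ⟨k, l⟩
      rcases Int.even_or_odd' (k + l) with ⟨c, hc | hc⟩
      · exact ⟨Sum.inl (k - c, c), by simp only [e, Sum.elim_inl, Prod.mk.injEq]; omega⟩
      · exact ⟨Sum.inr (c + 1, k - c - 1), by simp only [e, Sum.elim_inr, Prod.mk.injEq]; omega⟩
  refine thetaSeries_congr (Equiv.ofBijective e he) ?_
  rintro (⟨y, m⟩ | ⟨y, m⟩) <;>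
    simp only [Equiv.ofBijective_apply, e, Sum.elim_inl, Sum.elim_inr] <;> zify <;>
    rw [sqWeight_cast]
  · linarith [two_mul_tri_cast (m + y), two_mul_tri_cast (m - y), two_mul_tri_cast m]
  · linarith [two_mul_tri_cast (m + y), two_mul_tri_cast (y - m - 1), two_mul_tri_cast m]

/-- The part of `φ` coming from integers `≡ 1 (mod 3)`; those `≡ 2` give the same series. -/
noncomputable def phiUnit : ℤ⟦X⟧ := thetaSeries fun y : ℤ => sqWeight (3 * y + 1)

/-- The part of `psiInt` with index `≡ 1 (mod 3)`; its exponents are `≡ 1 (mod 3)`. -/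
noncomputable def psiOne : ℤ⟦X⟧ := thetaSeries fun k : ℤ => tri (3 * k + 1)

/-- The part of `psiInt` with index `≡ 0 (mod 3)`; those with index `≡ 2` give the same series. -/
noncomputable def psiZero : ℤ⟦X⟧ := thetaSeries fun k : ℤ => tri (3 * k)

theorem finiteFibres_phiZero : FiniteFibres fun y : ℤ => sqWeight (3 * y) :=
  finiteFibres_sqWeight.comp (f := fun y : ℤ => 3 * y) fun a b h => by simpa using h

theorem finiteFibres_phiUnit : FiniteFibres fun y : ℤ => sqWeight (3 * y + 1) :=
  finiteFibres_sqWeight.comp (f := fun y : ℤ => 3 * y + 1) fun a b h => by simpa using h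

theorem finiteFibres_psiOne : FiniteFibres fun k : ℤ => tri (3 * k + 1) :=
  finiteFibres_tri.comp (f := fun y : ℤ => 3 * y + 1) fun a b h => by simpa using h

theorem finiteFibres_psiZero : FiniteFibres fun k : ℤ => tri (3 * k) :=
  finiteFibres_tri.comp (f := fun y : ℤ => 3 * y) fun a b h => by simpa using h

theorem sqWeight_three_mul (y : ℤ) : sqWeight (3 * y) = 3 * (3 * sqWeight y) := by
  rw [sqWeight_eq_iff]; push_cast; rw [sqWeight_cast]; ring

theorem tri_three_mul_add_one (k : ℤ) : tri (3 * k + 1) = 9 * tri k + 1 := by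
  rw [tri_eq_iff]; push_cast; linarith [two_mul_tri_cast k]

theorem thetaSeries_phiZero : (thetaSeries fun y : ℤ => sqWeight (3 * y)) =
    expand 3 three_ne_zero (expand 3 three_ne_zero phi) := by
  simp_rw [sqWeight_three_mul]
  rw [thetaSeries_expand (fun y => 3 * sqWeight y) 3 three_ne_zero,
    thetaSeries_expand sqWeight 3 three_ne_zero, phi]

/-- The 3-dissection of `φ`. -/
theorem phi_dissection :
    phi = expand 3 three_ne_zero (expand 3 three_ne_zero phi) + 2 * phiUnit := by
  have hf := finiteFibres_phiUnit
  rw [two_mul, phiUnit, ← thetaSeries_phiZero, ← thetaSeries_sum hf hf,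
    ← thetaSeries_sum finiteFibres_phiZero (hf.sum hf), eq_comm, phi]
  let e : ℤ ⊕ (ℤ ⊕ ℤ) → ℤ :=
    Sum.elim (fun y => 3 * y) (Sum.elim (fun y => 3 * y + 1) fun y => -(3 * y + 1))
  have he : Function.Bijective e := by
    constructor
    · rintro (y | y | y) (y' | y' | y') h <;>
        simp only [e, Sum.elim_inl, Sum.elim_inr, Sum.inl.injEq, Sum.inr.injEq,
          reduceCtorEq] at h ⊢ <;> omega
    · intro y
      obtain h | h | h : y % 3 = 0 ∨ y % 3 = 1 ∨ y % 3 = 2 := by omega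
      · exact ⟨Sum.inl (y / 3), by simp only [e, Sum.elim_inl]; omega⟩
      · exact ⟨Sum.inr (Sum.inl (y / 3)), by simp only [e, Sum.elim_inl, Sum.elim_inr]; omega⟩
      · exact ⟨Sum.inr (Sum.inr (-(y / 3) - 1)), by simp only [e, Sum.elim_inr]; omega⟩
  refine thetaSeries_congr (Equiv.ofBijective e he) ?_
  rintro (y | y | y) <;> simp only [Equiv.ofBijective_apply, e, Sum.elim_inl, Sum.elim_inr]
  rw [sqWeight_eq_iff, sqWeight_cast]
  ring

/-- The 3-dissection of `psiInt`. -/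
theorem psiInt_dissection : psiInt = psiOne + 2 * psiZero := by
  have hf := finiteFibres_psiZero
  rw [two_mul, psiZero, psiOne, ← thetaSeries_sum hf hf,
    ← thetaSeries_sum finiteFibres_psiOne (hf.sum hf), eq_comm, psiInt]
  let e : ℤ ⊕ (ℤ ⊕ ℤ) → ℤ :=
    Sum.elim (fun k => 3 * k + 1) (Sum.elim (fun k => 3 * k) fun k => -1 - 3 * k)
  have he : Function.Bijective e := by
    constructor
    · rintro (y | y | y) (y' | y' | y') h <;>
        simp only [e, Sum.elim_inl, Sum.elim_inr, Sum.inl.injEq, Sum.inr.injEq,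
          reduceCtorEq] at h ⊢ <;> omega
    · intro y
      obtain h | h | h : y % 3 = 1 ∨ y % 3 = 0 ∨ y % 3 = 2 := by omega
      · exact ⟨Sum.inl (y / 3), by simp only [e, Sum.elim_inl]; omega⟩
      · exact ⟨Sum.inr (Sum.inl (y / 3)), by simp only [e, Sum.elim_inl, Sum.elim_inr]; omega⟩
      · exact ⟨Sum.inr (Sum.inr (-(y / 3) - 1)), by simp only [e, Sum.elim_inr]; omega⟩
  refine thetaSeries_congr (Equiv.ofBijective e he) ?_
  rintro (y | y | y) <;> simp only [Equiv.ofBijective_apply, e, Sum.elim_inl, Sum.elim_inr]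
  rw [tri_eq_iff, two_mul_tri_cast]
  ring

/-- The identity `3 (T b + 2 T a) + 1 = T K + Y ^ 2` with `K = 2 a - b` and `Y = a + b + 1`: the pairs
`(b, a)` correspond to the pairs `(K, Y)` with `K ≡ 2 Y + 1 (mod 3)`, and each of the three residue
classes of `Y` contributes one term on the right. -/
theorem lattice_identity :
    X * expand 3 three_ne_zero (psiInt * expand 2 two_ne_zero psiInt) =
      psiOne * expand 3 three_ne_zero (expand 3 three_ne_zero phi) +
        2 * (psiZero * phiUnit) := by
  have h2 := finiteFibres_tri.mul_left two_ne_zero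
  have hA := finiteFibres_psiZero.add finiteFibres_phiUnit
  rw [← thetaSeries_phiZero, psiOne, psiZero, phiUnit, psiInt, ← thetaSeries_expand tri,
    thetaSeries_mul finiteFibres_tri h2, ← thetaSeries_expand, ← thetaSeries_X_mul,
    thetaSeries_mul finiteFibres_psiOne finiteFibres_phiZero,
    thetaSeries_mul finiteFibres_psiZero finiteFibres_phiUnit, two_mul, ← thetaSeries_sum hA hA,
    ← thetaSeries_sum (finiteFibres_psiOne.add finiteFibres_phiZero) (hA.sum hA), eq_comm]
  -- inverse of `(b, a) ↦ (2 a - b, a + b + 1)` on each residue class of `a + b + 1`, the last class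
  -- being folded back by the symmetries `K ↦ -1 - K` and `Y ↦ -Y`
  let e : (ℤ × ℤ) ⊕ ((ℤ × ℤ) ⊕ (ℤ × ℤ)) → ℤ × ℤ :=
    Sum.elim (fun p => (2 * p.2 - 1 - p.1, p.1 + p.2))
      (Sum.elim (fun p => (2 * p.2 - p.1, p.1 + p.2))
        fun p => (p.1 - 2 * p.2 - 1, -p.1 - p.2 - 1))
  have he : Function.Bijective e := by
    constructor
    · rintro (⟨y, m⟩ | ⟨y, m⟩ | ⟨y, m⟩) (⟨y', m'⟩ | ⟨y', m'⟩ | ⟨y', m'⟩) h <;>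
        simp only [e, Sum.elim_inl, Sum.elim_inr, Prod.mk.injEq, Sum.inl.injEq, Sum.inr.injEq,
          reduceCtorEq] at h ⊢ <;> omega
    · rintro ⟨b, a⟩
      obtain h | h | h : (a + b + 1) % 3 = 0 ∨ (a + b + 1) % 3 = 1 ∨ (a + b + 1) % 3 = 2 := by
        omega
      · exact ⟨Sum.inl (a - (a + b + 1) / 3, (a + b + 1) / 3), by
          simp only [e, Sum.elim_inl, Prod.mk.injEq]; omega⟩
      · exact ⟨Sum.inr (Sum.inl (a - (a + b + 1) / 3, (a + b + 1) / 3)), by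
          simp only [e, Sum.elim_inl, Sum.elim_inr, Prod.mk.injEq]; omega⟩
      · exact ⟨Sum.inr (Sum.inr (-a + (a + b + 1) / 3, -((a + b + 1) / 3) - 1)), by
          simp only [e, Sum.elim_inr, Prod.mk.injEq]; omega⟩
  refine thetaSeries_congr (Equiv.ofBijective e he) ?_
  rintro (⟨k, y⟩ | ⟨k, y⟩ | ⟨k, y⟩) <;>
    simp only [Equiv.ofBijective_apply, e, Sum.elim_inl, Sum.elim_inr] <;> zify <;>
    rw [sqWeight_cast]
  · linarith [two_mul_tri_cast (2 * y - 1 - k), two_mul_tri_cast (k + y),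
      two_mul_tri_cast (3 * k + 1)]
  · linarith [two_mul_tri_cast (2 * y - k), two_mul_tri_cast (k + y),
      two_mul_tri_cast (3 * k)]
  · linarith [two_mul_tri_cast (k - 2 * y - 1), two_mul_tri_cast (-k - y - 1),
      two_mul_tri_cast (3 * k)]

/-- All exponents occurring in `f` lie in the residue class `r` modulo `3`. -/
def SupportedMod {R : Type*} [Semiring R] (r : ZMod 3) (f : R⟦X⟧) : Prop :=
  ∀ n : ℕ, (n : ZMod 3) ≠ r → coeff n f = 0

theorem SupportedMod.mul {R : Type*} [Semiring R] {r s : ZMod 3} {f g : R⟦X⟧}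
    (hf : SupportedMod r f) (hg : SupportedMod s g) : SupportedMod (r + s) (f * g) := by
  intro n hn
  rw [coeff_mul]
  refine Finset.sum_eq_zero fun ij hij => ?_
  have h := Finset.HasAntidiagonal.mem_antidiagonal.mp hij
  by_cases h1 : (ij.1 : ZMod 3) = r
  · rw [hg ij.2, mul_zero]
    rintro rfl
    exact hn (by rw [← h, Nat.cast_add, h1])
  · rw [hf ij.1 h1, zero_mul]

theorem supportedMod_thetaSeries {α R : Type*} [Semiring R] (i : ℤ →+* R) {w : α → ℕ} {r : ZMod 3}
    (h : ∀ a, (w a : ZMod 3) = r) : SupportedMod r (map i (thetaSeries w)) := by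
  intro n hn
  have : IsEmpty {a // w a = n} := ⟨fun a => hn (by rw [← a.2, h])⟩
  simp [thetaSeries]

/-- The section `∑ a (3 n + 1) X ^ n` of `∑ a n X ^ n`. -/
noncomputable def sect {R : Type*} [CommRing R] (f : R⟦X⟧) : R⟦X⟧ :=
  PowerSeries.mk fun n => coeff (3 * n + 1) f

theorem sect_add {R : Type*} [CommRing R] (f g : R⟦X⟧) : sect (f + g) = sect f + sect g := by
  ext n; simp [sect]

theorem sect_eq_zero {R : Type*} [CommRing R] {r : ZMod 3} {f : R⟦X⟧} (hf : SupportedMod r f)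
    (hr : r ≠ 1) : sect f = 0 := by
  ext n
  rw [sect, coeff_mk, hf, map_zero]
  push_cast
  rw [show (3 : ZMod 3) = 0 from rfl]
  simpa using hr.symm

theorem sect_X_mul_expand {R : Type*} [CommRing R] (g : R⟦X⟧) :
    sect (X * expand 3 three_ne_zero g) = g := by
  ext n
  rw [sect, coeff_mk, coeff_succ_X_mul, coeff_expand_mul]

theorem sect_mul_expand {R : Type*} [CommRing R] (f g : R⟦X⟧) :
    sect (f * expand 3 three_ne_zero g) = sect f * g := by
  ext n
  rw [sect, coeff_mk, coeff_mul, coeff_mul]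
  symm
  refine Finset.sum_of_injOn (fun ij => (3 * ij.1 + 1, 3 * ij.2)) ?_ ?_ ?_ ?_
  · rintro ⟨a, b⟩ - ⟨c, d⟩ - h
    simp only [Prod.mk.injEq] at h ⊢
    omega
  · rintro ⟨a, b⟩ h
    simp only [Finset.mem_coe, Finset.HasAntidiagonal.mem_antidiagonal] at h ⊢
    omega
  · rintro ⟨a, b⟩ h hn
    rw [Finset.HasAntidiagonal.mem_antidiagonal] at h
    dsimp only at h ⊢
    rw [coeff_expand_of_not_dvd, mul_zero]
    rintro ⟨c, rfl⟩
    refine hn ⟨(n - c, c), ?_, ?_⟩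
    · simp only [Finset.mem_coe, Finset.HasAntidiagonal.mem_antidiagonal]; omega
    · have : 3 * (n - c) + 1 = a := by omega
      simp only [this]
  · rintro ⟨a, b⟩ -
    simp [sect]

theorem pow_three_eq_expand (f : (ZMod 3)⟦X⟧) : f ^ 3 = expand 3 three_ne_zero f := by
  have h := MvPowerSeries.map_frobenius_expand (R := ZMod 3) (p := 3) three_ne_zero (f := f)
  rw [ZMod.frobenius_zmod, MvPowerSeries.map_id] at h
  exact h.symm

/-- Modulo `3`, the terms of index `3 n + 1` of the `ped` series sum to `2 φ(q) ψ(q ^ 3)`. Writing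
`p`, `f`, `s`, `s₂` for the `ped` series, `φ(q)`, `psiInt` and `psiInt` at `q ^ 2`, one has
`2 p f ^ 3 = s f ^ 2`, and `f ^ 3` is a series in `q ^ 3`. Dissecting the right side gives
`2 (sect p) f = s s₂ f ^ 3`, and `s ^ 2 = 2 f s₂` turns this into `sect p = f s ^ 3`. -/
theorem sect_pedSeries :
    sect (map (Int.castRingHom (ZMod 3)) pedSeries) =
      map (Int.castRingHom (ZMod 3)) (phi * expand 3 three_ne_zero psiInt) := by
  set F : ℤ⟦X⟧ →+* (ZMod 3)⟦X⟧ := map (Int.castRingHom (ZMod 3)) with hF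
  have h3 : (3 : (ZMod 3)⟦X⟧) = 0 := by
    have := map_ofNat (C (R := ZMod 3)) 3
    rw [← this, show (OfNat.ofNat 3 : ZMod 3) = 0 from rfl, map_zero]
  have hpf : 2 * F pedSeries * F phi = F psiInt := by
    rw [psiInt_eq, ← pedSeries_mul_phi]; simp only [map_mul, map_ofNat]; ring
  have hss : F psiInt ^ 2 = 2 * F phi * F (expand 2 two_ne_zero psiInt) := by
    rw [← map_pow, psiInt_sq]; simp only [map_mul, map_ofNat]
  have hs : F psiInt = F psiOne + 2 * F psiZero := by
    conv_lhs => rw [psiInt_dissection]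
    simp only [map_add, map_mul, map_ofNat]
  set Z := expand 3 three_ne_zero (expand 3 three_ne_zero (F phi)) with hZ
  have hFZ : F (expand 3 three_ne_zero (expand 3 three_ne_zero phi)) = Z := by
    simp only [hF, hZ, map_expand]
  have hf : F phi = Z + 2 * F phiUnit := by
    conv_lhs => rw [phi_dissection]
    simp only [map_add, map_mul, map_ofNat, hFZ]
  have hL : X * expand 3 three_ne_zero (F (psiInt * expand 2 two_ne_zero psiInt)) =
      F psiOne * Z + 2 * (F psiZero * F phiUnit) := by
    have := congrArg F lattice_identity
    simp only [map_add, map_mul F, map_ofNat, hFZ] at this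
    rw [← this]
    simp only [hF, map_expand, map_X, map_mul]
  -- residue classes of the four pieces
  have sZ : SupportedMod 0 Z := by
    intro n hn
    refine coeff_expand_of_not_dvd _ _ _ fun h => hn ?_
    exact (ZMod.natCast_eq_zero_iff n 3).mpr h
  have sO : SupportedMod 1 (F phiUnit) := supportedMod_thetaSeries _ fun y => by
    rw [← Int.cast_natCast, sqWeight_cast]; push_cast; rw [show (3 : ZMod 3) = 0 from rfl]; ring
  have sP : SupportedMod 1 (F psiOne) := supportedMod_thetaSeries _ fun k => by
    rw [tri_three_mul_add_one]; push_cast; rw [show (9 : ZMod 3) = 0 from rfl]; ring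
  have sA : SupportedMod 0 (F psiZero) := supportedMod_thetaSeries _ fun k => by
    rw [ZMod.natCast_eq_zero_iff]
    have := two_mul_tri_cast (3 * k)
    rw [mul_assoc] at this
    omega
  -- modulo `3`, the products of pieces with exponents `≡ 1 (mod 3)` add up to `Z` times the right side
  -- of `lattice_identity`
  have key : sect (F psiInt * F phi ^ 2) =
      F (psiInt * expand 2 two_ne_zero psiInt) * F phi ^ 3 := by
    have e : F psiInt * F phi ^ 2 =
        X * expand 3 three_ne_zero
          (F (psiInt * expand 2 two_ne_zero psiInt) * expand 3 three_ne_zero (F phi)) +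
        F psiOne * Z * F phiUnit + F psiOne * F phiUnit * F phiUnit +
        (F psiZero * Z * Z + F psiZero * Z * Z) +
        (F psiZero * F phiUnit * F phiUnit + F psiZero * F phiUnit * F phiUnit) := by
      rw [map_mul (expand 3 three_ne_zero), ← hZ, ← mul_assoc X, hL, hs, hf]
      linear_combination (2 * F psiZero * Z * F phiUnit + F psiOne * Z * F phiUnit
        + F psiOne * F phiUnit ^ 2 + 2 * F psiZero * F phiUnit ^ 2) * h3
    rw [e]
    simp only [sect_add]
    rw [sect_X_mul_expand, sect_eq_zero ((sP.mul sZ).mul sO) (by decide),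
      sect_eq_zero ((sP.mul sO).mul sO) (by decide), sect_eq_zero ((sA.mul sZ).mul sZ) (by decide),
      sect_eq_zero ((sA.mul sO).mul sO) (by decide), pow_three_eq_expand]
    ring
  have hU : sect (F psiInt * F phi ^ 2) = 2 * sect (F pedSeries) * F phi := by
    have : F psiInt * F phi ^ 2 =
        (F pedSeries + F pedSeries) * expand 3 three_ne_zero (F phi) := by
      rw [← pow_three_eq_expand, ← hpf]; ring
    rw [this, sect_mul_expand, sect_add, two_mul]
  have hne : F phi ≠ 0 := by
    intro h
    have h1 : F phi = 1 + 2 * F (thetaSeries fun y : ℕ => (y + 1) ^ 2) := by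
      rw [phi_eq]; simp only [map_add, map_mul, map_ofNat, map_one]
    have h2 := congrArg (coeff 0) h1
    have h3 : coeff 0 (F (thetaSeries fun y : ℕ => (y + 1) ^ 2)) = 0 := by
      rw [hF, coeff_map]
      simp [thetaSeries]
    rw [h, two_mul, map_add, map_add, h3] at h2
    simp at h2
  rw [map_mul, hF, map_expand, ← hF, ← pow_three_eq_expand]
  apply mul_right_cancel₀ hne
  rw [key, map_mul] at hU
  linear_combination (-2) * hU - (F psiInt * F phi ^ 2) * hss - (sect (F pedSeries) * F phi) * h3

/-! ### The two congruences -/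

theorem coeff_thetaSeries_eq {α β : Type*} {w : α → ℕ} {v : β → ℕ} {m n : ℕ} {f : α → β}
    (hf : Function.Injective f) (h : ∀ a, v (f a) = n ↔ w a = m)
    (hs : ∀ b, v b = n → ∃ a, f a = b) :
    coeff m (thetaSeries w) = coeff n (thetaSeries v) := by
  simp only [thetaSeries, coeff_mk]
  congr 1
  refine Nat.card_congr (Equiv.ofBijective
    (fun a : {a // w a = m} => (⟨f a.1, (h a.1).mpr a.2⟩ : {b // v b = n})) ⟨?_, ?_⟩)
  · exact fun a b hab => Subtype.ext (hf (congrArg Subtype.val hab))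
  · rintro ⟨b, hb⟩
    obtain ⟨a, rfl⟩ := hs b hb
    exact ⟨⟨a, (h a).mp hb⟩, rfl⟩

/-- A triangular number `≡ 1 (mod 3)` has index `≡ 1 (mod 3)`. -/
theorem index_mod_three {k : ℤ} {m : ℕ} (h : tri k = 3 * m + 1) : k % 3 = 1 := by
  have h2 := two_mul_tri_cast k
  rw [h] at h2
  obtain ⟨j, rfl | rfl | rfl⟩ : ∃ j, k = 3 * j ∨ k = 3 * j + 1 ∨ k = 3 * j + 2 :=
    ⟨k / 3, by omega⟩
  · rw [mul_assoc] at h2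
    push_cast at h2
    omega
  · omega
  · rw [show (3 * j + 2) * (3 * j + 2 + 1) = 3 * ((3 * j + 2) * (j + 1)) by ring] at h2
    push_cast at h2
    omega

/-- The bijection `k ↦ 3 k + 1` with `T (3 k + 1) = 9 T k + 1`. -/
theorem coeff_psi (m : ℕ) : coeff m psi = coeff (9 * m + 1) psi := by
  refine coeff_thetaSeries_eq (f := fun k : ℕ => 3 * k + 1) (fun a b h => by simpa using h)
    (fun k => ?_) fun k hk => ?_
  · push_cast
    rw [tri_three_mul_add_one]
    omega
  · have := index_mod_three (m := 3 * m) (k := k) (by omega)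
    exact ⟨k / 3, by omega⟩

/-- As `φ ≡ 1 (mod 2)`, the `ped` series is congruent to `ψ`. -/
theorem ped_sub_psi_even (n : ℕ) : (2 : ℤ) ∣ ped n - coeff n psi := by
  have h := congrArg (coeff n) pedSeries_mul_phi
  rw [phi_eq, mul_add, mul_one, mul_left_comm, two_mul, map_add, map_add, pedSeries,
    coeff_mk] at h
  rcases neg_one_pow_eq_or ℤ n with hn | hn <;> rw [hn] at h <;> omega

theorem two_dvd_ped_add (n : ℕ) : 2 ∣ ped (3 * n + 1) + ped (27 * n + 10) := by
  have h1 := ped_sub_psi_even (3 * n + 1)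
  have h2 := ped_sub_psi_even (27 * n + 10)
  rw [coeff_psi, show 9 * (3 * n + 1) + 1 = 27 * n + 10 by ring] at h1
  omega

theorem phi_mul_expand_psiInt : phi * expand 3 three_ne_zero psiInt =
    thetaSeries fun p : ℤ × ℤ => sqWeight p.1 + 3 * tri p.2 := by
  rw [phi, psiInt, ← thetaSeries_expand,
    thetaSeries_mul finiteFibres_sqWeight (finiteFibres_tri.mul_left three_ne_zero)]

/-- The representations of `n` and of `9 n + 3` by `y ^ 2 + 3 T k` correspond under
`(y, k) ↦ (3 y, 3 k + 1)`. -/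
theorem coeff_phi_mul_expand_psiInt (n : ℕ) :
    coeff n (phi * expand 3 three_ne_zero psiInt) =
      coeff (9 * n + 3) (phi * expand 3 three_ne_zero psiInt) := by
  rw [phi_mul_expand_psiInt]
  refine coeff_thetaSeries_eq (f := fun p : ℤ × ℤ => (3 * p.1, 3 * p.2 + 1)) ?_ ?_ ?_
  · rintro ⟨a, b⟩ ⟨c, d⟩ h
    simpa using h
  · rintro ⟨y, k⟩
    rw [sqWeight_three_mul, tri_three_mul_add_one]
    omega
  · rintro ⟨y, k⟩ h
    dsimp only at h
    obtain ⟨z, rfl⟩ : (3 : ℤ) ∣ y := by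
      refine Int.prime_three.dvd_of_dvd_pow (n := 2) ?_
      rw [← sqWeight_cast]
      omega
    rw [sqWeight_three_mul] at h
    have := index_mod_three (m := n - sqWeight z) (k := k) (by omega)
    exact ⟨(z, k / 3), Prod.ext rfl (by dsimp only; omega)⟩

theorem ped_mod_three (n : ℕ) : (-1) ^ (3 * n + 1) * (ped (3 * n + 1) : ZMod 3) =
    ((coeff n (phi * expand 3 three_ne_zero psiInt) : ℤ) : ZMod 3) := by
  have h := congrArg (coeff n) sect_pedSeries
  rw [sect, coeff_mk, coeff_map, coeff_map, pedSeries, coeff_mk] at h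
  simpa using h

theorem three_dvd_ped_add (n : ℕ) : 3 ∣ ped (3 * n + 1) + ped (27 * n + 10) := by
  have h1 := ped_mod_three n
  have h2 := ped_mod_three (9 * n + 3)
  rw [← coeff_phi_mul_expand_psiInt, ← h1, show 3 * (9 * n + 3) + 1 = 27 * n + 10 by ring,
    show 27 * n + 10 = (3 * n + 1) + 1 + 2 * (12 * n + 4) by ring, pow_add _ _ (2 * _), pow_mul,
    neg_one_sq, one_pow, mul_one, pow_succ,
    show (3 * n + 1) + 1 + 2 * (12 * n + 4) = 27 * n + 10 by ring] at h2
  rw [← ZMod.natCast_eq_zero_iff, Nat.cast_add]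
  rcases neg_one_pow_eq_or (ZMod 3) (3 * n + 1) with hn | hn <;> rw [hn] at h2
  · linear_combination -h2
  · linear_combination h2

theorem ped_internal_congruence (n : ℕ) :
    6 ∣ ped (3 * n + 1) + ped (27 * n + 10) := by
  have h2 := two_dvd_ped_add n
  have h3 := three_dvd_ped_add n
  omega
end

section
/- For all integers n ≥ 0, p̄_o(3n) ≡ p̄_o(27n) (mod 12). -/
/-!
The congruence is proved modulo `4` and modulo `3` separately.

Modulo `4`, writing an overpartition as a partition with some distinct part sizes overlined gives
`pbarOdd n ≡ 2 · #{odd divisors of n}` for `n > 0` (`pbarOdd_mod_four`), and the number of odd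
divisors keeps its parity when `n` is multiplied by `9`.

Modulo `3`, let `φ(q) = ∑ q ^ x²` over all integers `x` and let `P` be the generating function of
`pbarOdd`. Gauss's identity `φ(-q) = ∏ (1 - qⁱ) / (1 + qⁱ)` (`gauss`, from the Rogers-Fine recursion
`fineSum_step`) gives `P(q) = φ(q) / φ(-q²)` (`genFun_mul_theta`). Since `φ(-q²)³ ≡ φ(-q⁶)`, it
follows that `P(q) φ(-q⁶) ≡ φ(q) φ(-q²)²`. The coefficients at multiples of `3` of the right side
are computed from the splitting of `3` in `ℤ[√-2]` (`U_binary`, `U_ternary`), and cancelling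
`φ(-q²)` yields `∑ pbarOdd(3n) qⁿ ≡ φ(-q) φ(-q⁶)` (`U_genFun`). The `n`-th coefficient of the
latter is a signed count of the solutions of `x² + 6y² = n`, and these correspond to the solutions
for `9n` through `(x, y) ↦ (3x, 3y)` (`coeff_nine`).
-/

open PowerSeries

/-- `pbarOdd n` is the number of overpartitions of `n` into odd parts: pairs `(μ, ν)` of
partitions into odd parts with total size `n`, where `μ` has distinct parts. -/
noncomputable def pbarOdd (n : ℕ) : ℕ :=
  Nat.card {p : Multiset ℕ × Multiset ℕ //
    p.1.Nodup ∧ (∀ i ∈ p.1, Odd i) ∧ (∀ i ∈ p.2, Odd i) ∧ p.1.sum + p.2.sum = n}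

/-! ### Overpartitions into odd parts and the congruence modulo `4` -/

/-- The weight `2` for each distinct odd part and `0` for an even one: each distinct part of a
partition into odd parts is overlined or not, independently of its multiplicity `_c`. -/
def oddWeight {R : Type*} [CommSemiring R] (i _c : ℕ) : R := if Odd i then 2 else 0

/-- An overpartition `(μ, ν)` is the partition `μ + ν` together with the set of its overlined part
sizes, so a partition into odd parts with `k` distinct sizes underlies `2 ^ k` overpartitions. -/
theorem pbarOdd_eq_sum (n : ℕ) :
    pbarOdd n = ∑ p : n.Partition, p.parts.toFinsupp.prod (oddWeight (R := ℕ)) := by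
  let A := {p : Multiset ℕ × Multiset ℕ //
    p.1.Nodup ∧ (∀ i ∈ p.1, Odd i) ∧ (∀ i ∈ p.2, Odd i) ∧ p.1.sum + p.2.sum = n}
  let g : A → n.Partition := fun a =>
    ⟨a.1.1 + a.1.2, fun {i} hi => by
      rcases Multiset.mem_add.1 hi with h | h
      · exact (a.2.2.1 i h).pos
      · exact (a.2.2.2.1 i h).pos, by simpa using a.2.2.2.2⟩
  have hfib (p : n.Partition) : Finite {a : A // g a = p} ∧
      Nat.card {a : A // g a = p} = p.parts.toFinsupp.prod (oddWeight (R := ℕ)) := by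
    by_cases hp : ∀ i ∈ p.parts, Odd i
    · let e : {a : A // g a = p} ≃ p.parts.toFinset.powerset :=
        { toFun := fun a => ⟨a.1.1.1.toFinset, by
            have := congrArg Nat.Partition.parts a.2
            simp only [g] at this
            rw [Finset.mem_powerset, ← this, Multiset.toFinset_add]
            exact Finset.subset_union_left⟩
          invFun := fun t => ⟨⟨(t.1.val, p.parts - t.1.val), by
            have ht := Finset.mem_powerset.1 t.2
            have hle : t.1.val ≤ p.parts :=
              (Finset.val_le_iff.2 ht).trans (by simpa using Multiset.dedup_le _)
            refine ⟨t.1.nodup, fun i hi => hp i (Multiset.mem_of_le hle hi), fun i hi =>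
              hp i (Multiset.mem_of_le (Multiset.sub_le_self _ _) hi), ?_⟩
            rw [← Multiset.sum_add, add_tsub_cancel_of_le hle, p.parts_sum]⟩, by
            have ht := Finset.mem_powerset.1 t.2
            have hle : t.1.val ≤ p.parts :=
              (Finset.val_le_iff.2 ht).trans (by simpa using Multiset.dedup_le _)
            apply Nat.Partition.ext
            simp [g, add_tsub_cancel_of_le hle]⟩
          left_inv := by
            rintro ⟨⟨⟨μ, ν⟩, h⟩, rfl⟩
            simp [g, h.1.dedup]
          right_inv := by
            rintro ⟨t, ht⟩
            simp }
      refine ⟨Finite.of_equiv _ e.symm, ?_⟩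
      rw [Nat.card_congr e, Nat.card_eq_fintype_card, Fintype.card_coe, Finset.card_powerset,
        Finsupp.prod, Multiset.toFinsupp_support, Finset.prod_congr rfl (g := fun _ => 2)]
      · simp
      · intro i hi
        simp [oddWeight, hp i (by simpa using hi)]
    · have : IsEmpty {a : A // g a = p} := by
        refine ⟨fun a => hp ?_⟩
        rw [← a.2]
        intro i hi
        rcases Multiset.mem_add.1 hi with h | h
        · exact a.1.2.2.1 i h
        · exact a.1.2.2.2.1 i h
      refine ⟨inferInstance, ?_⟩
      push Not at hp
      obtain ⟨i, hi, ho⟩ := hp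
      rw [Nat.card_of_isEmpty, Finsupp.prod, eq_comm]
      exact Finset.prod_eq_zero (i := i) (by simpa using hi)
        (by simp only [oddWeight, if_neg ho])
  have (p : n.Partition) := (hfib p).1
  change Nat.card A = _
  rw [Nat.card_congr (Equiv.sigmaFiberEquiv g).symm, Nat.card_sigma]
  exact Finset.sum_congr rfl fun p _ => (hfib p).2

/-- Modulo `4` only the partitions with a single part size `d` survive; `d` is then an odd divisor
of `n`. -/
theorem pbarOdd_mod_four {n : ℕ} (hn : n ≠ 0) :
    pbarOdd n ≡ 2 * (n.divisors.filter Odd).card [MOD 4] := by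
  classical
  have hterm (p : n.Partition) : p.parts.toFinsupp.prod (oddWeight (R := ℕ)) ≡
      if ∃ d, Odd d ∧ p.parts.toFinset = {d} then 2 else 0 [MOD 4] := by
    rw [Finsupp.prod, Multiset.toFinsupp_support]
    have hne : p.parts.toFinset.Nonempty := by
      rw [Finset.nonempty_iff_ne_empty]
      intro h
      have := p.parts_sum
      simp only [Multiset.toFinset_eq_empty] at h
      simp [h] at this
      omega
    obtain h1 | h2 : p.parts.toFinset.card = 1 ∨ 2 ≤ p.parts.toFinset.card := by
      have := hne.card_pos; omega
    · obtain ⟨d, hd⟩ := Finset.card_eq_one.1 h1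
      by_cases ho : Odd d <;> simp [hd, oddWeight, ho, Nat.ModEq.refl]
    · rw [if_neg, Nat.modEq_zero_iff_dvd]
      · calc 4 ∣ 2 ^ p.parts.toFinset.card := pow_dvd_pow 2 h2
          _ = ∏ i ∈ p.parts.toFinset, 2 := by simp
          _ ∣ _ := Finset.prod_dvd_prod_of_dvd _ _ fun i _ => by unfold oddWeight; split <;> simp
      · rintro ⟨d, -, hd⟩
        simp [hd] at h2
  rw [pbarOdd_eq_sum]
  refine (Nat.ModEq.sum fun p _ => hterm p).trans ?_
  rw [← Finset.sum_filter, Finset.sum_const, smul_eq_mul, mul_comm]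
  suffices h : (Finset.univ.filter fun p : n.Partition =>
      ∃ d, Odd d ∧ p.parts.toFinset = {d}).card = (n.divisors.filter Odd).card by rw [h]
  symm
  refine Finset.card_bij (fun d hd => ⟨Multiset.replicate (n / d) d, ?_, ?_⟩) ?_ ?_ ?_
  · intro i hi
    rw [Multiset.eq_of_mem_replicate hi]
    exact (Finset.mem_filter.1 hd).2.pos
  · simpa using Nat.div_mul_cancel (Nat.dvd_of_mem_divisors (Finset.mem_filter.1 hd).1)
  · intro d hd
    simp only [Finset.mem_filter, Nat.mem_divisors] at hd
    refine Finset.mem_filter.2 ⟨Finset.mem_univ _, d, hd.2, ?_⟩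
    have : n / d ≠ 0 := by
      have := Nat.div_pos (Nat.le_of_dvd (by omega) hd.1.1) hd.2.pos; omega
    simp [Multiset.toFinset_replicate, this]
  · intro d hd e he h
    have hn' : n / d ≠ 0 := by
      simp only [Finset.mem_filter, Nat.mem_divisors] at hd
      have := Nat.div_pos (Nat.le_of_dvd (by omega) hd.1.1) hd.2.pos; omega
    have h := congrArg Nat.Partition.parts h
    simp only at h
    exact Multiset.eq_of_mem_replicate (h ▸ Multiset.mem_replicate.2 ⟨hn', rfl⟩)
  · intro p hp
    obtain ⟨-, d, hd, h⟩ := Finset.mem_filter.1 hp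
    have hr : p.parts = Multiset.replicate (p.parts.card) d :=
      Multiset.eq_replicate_card.2 fun b hb => by
        simpa [h] using Multiset.mem_toFinset.2 hb
    have hs : p.parts.card * d = n := by
      have := p.parts_sum
      rw [hr] at this
      simpa using this
    refine ⟨d, ?_, ?_⟩
    · exact Finset.mem_filter.2 ⟨Nat.mem_divisors.2 ⟨Dvd.intro_left _ hs, hn⟩, hd⟩
    · apply Nat.Partition.ext
      simp only
      rw [hr]
      congr 1
      exact Nat.div_eq_of_eq_mul_left hd.pos hs.symm

theorem card_odd_divisors_parity {n : ℕ} (hn : n ≠ 0) :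
    (n.divisors.filter Odd).card ≡ ((9 * n).divisors.filter Odd).card [MOD 2] := by
  have hodd (k m : ℕ) (hm : Odd m) : ((2 ^ k * m).divisors.filter Odd) = m.divisors := by
    ext d
    simp only [Finset.mem_filter, Nat.mem_divisors]
    constructor
    · rintro ⟨⟨h, -⟩, ho⟩
      exact ⟨(ho.coprime_two_right.pow_right k).dvd_of_dvd_mul_left h, hm.pos.ne'⟩
    · rintro ⟨h, h0⟩
      exact ⟨⟨h.mul_left _, by positivity⟩, hm.of_dvd_nat h⟩
  obtain ⟨k, m, hm, rfl⟩ := Nat.exists_eq_two_pow_mul_odd hn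
  rw [hodd k m hm, show 9 * (2 ^ k * m) = 2 ^ k * (9 * m) by ring,
    hodd k _ (Odd.mul (by decide) hm)]
  obtain ⟨a, b, hb, rfl⟩ := Nat.exists_eq_pow_mul_and_not_dvd hm.pos.ne' 3 (by norm_num)
  have hc (j : ℕ) : Nat.Coprime (3 ^ j) b :=
    ((Nat.Prime.coprime_iff_not_dvd Nat.prime_three).2 hb).pow_left j
  rw [show 9 * (3 ^ a * b) = 3 ^ (a + 2) * b by ring, (hc a).card_divisors_mul,
    (hc _).card_divisors_mul, Nat.divisors_prime_pow Nat.prime_three,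
    Nat.divisors_prime_pow Nat.prime_three]
  simp only [Finset.card_map, Finset.card_range]
  exact Nat.ModEq.mul_right _ (by simp [Nat.ModEq, Nat.add_mod])

/-! ### Gauss's product for the alternating theta series -/

section Gauss
variable {R : Type*} [CommRing R]

/-- The partial sum with `M` terms of the Rogers-Fine series
`∑ₙ (x q; q)ₙ (x q)ⁿ / (-x q; q)ₙ₊₁` at `x = q ^ k`, where `u i` stands for the inverse of
`1 + q ^ (i + 1)`. -/
def fineSum (q : R) (u : ℕ → R) (k M : ℕ) : R :=
  ∑ n ∈ Finset.range M, q ^ ((k + 1) * n) * (∏ i ∈ Finset.range n, (1 - q ^ (k + 1 + i))) *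
    ∏ i ∈ Finset.range (n + 1), u (k + i)

/-- One step of the Rogers-Fine recursion: termwise the left side telescopes, and the last term on
the right is the remainder. -/
theorem fineSum_step (q : R) (u : ℕ → R) (hu : ∀ k, u k * (1 + q ^ (k + 1)) = 1) (k M : ℕ) :
    fineSum q u k (M + 1) + q ^ (2 * k + 3) * fineSum q u (k + 1) (M + 1) =
      1 - q ^ ((k + 1) * (M + 1)) * (∏ i ∈ Finset.range M, (1 - q ^ (k + 2 + i))) *
        (1 - q ^ (2 * k + M + 3)) * ∏ i ∈ Finset.range (M + 2), u (k + i) := by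
  induction M with
  | zero =>
    simp only [fineSum, Finset.sum_range_succ, Finset.prod_range_succ, Finset.sum_range_zero,
      Finset.prod_range_zero]
    have h0 := hu k
    have h1 := hu (k + 1)
    simp only [add_zero, zero_add, mul_zero, pow_zero, one_mul]
    linear_combination (-u k) * h1 - q ^ (2 * k + 3) * u (k + 1) * h0 +
      u (k + 1) * (1 + q ^ (k + 2)) * h0 + h1
  | succ M ih =>
    have e1 (k : ℕ) : fineSum q u k (M + 1 + 1) = fineSum q u k (M + 1) +
       q ^ ((k + 1) * (M + 1)) * (∏ i ∈ Finset.range (M + 1), (1 - q ^ (k + 1 + i))) *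
        ∏ i ∈ Finset.range (M + 1 + 1), u (k + i) := Finset.sum_range_succ _ _
    have h0 := hu k
    have h2 := hu (k + (M + 2))
    have p1 : ∏ i ∈ Finset.range (M + 1), (1 - q ^ (k + 1 + i)) =
        (∏ i ∈ Finset.range M, (1 - q ^ (k + 2 + i))) * (1 - q ^ (k + 1)) := by
      rw [Finset.prod_range_succ']
      simp only [add_zero]
      congr 1
      exact Finset.prod_congr rfl fun i _ => by ring
    have p2 : ∏ i ∈ Finset.range (M + 2 + 1), u (k + i) =
        (∏ i ∈ Finset.range (M + 2), u (k + 1 + i)) * u k := by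
      rw [Finset.prod_range_succ']
      simp only [add_zero]
      congr 1
      exact Finset.prod_congr rfl fun i _ => by congr 1; ring
    have p3 := Finset.prod_range_succ (fun i => u (k + i)) (M + 2)
    rw [e1 k, e1 (k + 1), p1, show M + 1 + 2 = M + 2 + 1 by ring, p3,
      Finset.prod_range_succ (fun i => 1 - q ^ (k + 2 + i)), show k + 1 + 1 = k + 2 by ring]
    have hA : (∏ i ∈ Finset.range (M + 2), u (k + 1 + i)) =
        (∏ i ∈ Finset.range (M + 2), u (k + i)) * u (k + (M + 2)) * (1 + q ^ (k + 1)) := by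
      linear_combination (-(∏ i ∈ Finset.range (M + 2), u (k + 1 + i))) * h0 + (1 + q ^ (k + 1)) * (p3 - p2)
    have hB : (∏ i ∈ Finset.range (M + 2), u (k + i)) =
        (∏ i ∈ Finset.range (M + 2), u (k + i)) * u (k + (M + 2)) * (1 + q ^ (k + (M + 2) + 1)) := by
      linear_combination (-(∏ i ∈ Finset.range (M + 2), u (k + i))) * h2
    rw [show M + 1 + 1 = M + 2 by ring, hA]
    linear_combination ih + q ^ ((k + 1) * (M + 1)) * (∏ i ∈ Finset.range M, (1 - q ^ (k + 2 + i))) *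
      ((1 - q ^ (k + 1)) - (1 - q ^ (2 * k + M + 3))) * hB

/-- The recursion `fineSum_step` applied `J` times, with the remainders discarded modulo
`q ^ (M + 1)`. -/
theorem gauss_iter (q : R) (u : ℕ → R) (hu : ∀ k, u k * (1 + q ^ (k + 1)) = 1) (M J k : ℕ) :
    q ^ (M + 1) ∣ fineSum q u k (M + 1) - (∑ j ∈ Finset.range J, (-1) ^ j * q ^ (j ^ 2 + 2 * j + 2 * k * j))
      - (-1) ^ J * q ^ (J ^ 2 + 2 * J + 2 * k * J) * fineSum q u (k + J) (M + 1) := by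
  induction J with
  | zero => simp
  | succ J ih =>
    have hs := fineSum_step q u hu (k + J) M
    obtain ⟨r, hr⟩ := ih
    rw [Finset.sum_range_succ]
    refine ⟨r - (-1) ^ J * q ^ (J ^ 2 + 2 * J + 2 * k * J) * (q ^ ((k + J) * (M + 1)) *
      (∏ i ∈ Finset.range M, (1 - q ^ (k + J + 2 + i))) *
        (1 - q ^ (2 * (k + J) + M + 3)) * ∏ i ∈ Finset.range (M + 2), u (k + J + i)), ?_⟩
    rw [← add_assoc k J 1]
    linear_combination hr + (-1) ^ J * q ^ (J ^ 2 + 2 * J + 2 * k * J) * hs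

theorem gauss_prod (q : R) (u : ℕ → R) (hu : ∀ k, u k * (1 + q ^ (k + 1)) = 1) (M : ℕ) :
    ∏ i ∈ Finset.range M, (1 - q ^ (i + 1)) * u i = 1 - 2 * q * fineSum q u 0 M := by
  induction M with
  | zero => simp [fineSum]
  | succ M ih =>
    have e : fineSum q u 0 (M + 1) = fineSum q u 0 M + q ^ M *
        (∏ i ∈ Finset.range M, (1 - q ^ (i + 1)) * u i) * u M := by
      rw [fineSum, Finset.sum_range_succ, ← fineSum, Finset.prod_mul_distrib,
        Finset.prod_range_succ (fun i => u (0 + i))]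
      simp only [zero_add, add_comm 1, one_mul]
      ring
    rw [Finset.prod_range_succ, e]
    linear_combination ih + (∏ i ∈ Finset.range M, (1 - q ^ (i + 1)) * u i) * hu M

/-- Gauss's identity `∏ (1 - qⁱ) / (1 + qⁱ) = ∑ (-1)ʲ q ^ j²` (sum over all integers `j`), truncated
modulo `q ^ M`. -/
theorem gauss (q : R) (u : ℕ → R) (hu : ∀ k, u k * (1 + q ^ (k + 1)) = 1) (M : ℕ) :
    q ^ M ∣ ∏ i ∈ Finset.range M, (1 - q ^ (i + 1)) * u i -
      (1 + 2 * ∑ j ∈ Finset.range M, (-1) ^ (j + 1) * q ^ ((j + 1) ^ 2)) := by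
  cases M with
  | zero => simp
  | succ M =>
    rw [gauss_prod q u hu]
    obtain ⟨r, hr⟩ := gauss_iter q u hu M (M + 1) 0
    have hS : ∑ j ∈ Finset.range (M + 1), (-1 : R) ^ (j + 1) * q ^ ((j + 1) ^ 2) =
        -q * ∑ j ∈ Finset.range (M + 1), (-1) ^ j * q ^ (j ^ 2 + 2 * j + 2 * 0 * j) := by
      rw [Finset.mul_sum]
      exact Finset.sum_congr rfl fun j _ => by ring
    rw [hS]
    refine ⟨-2 * q * (r + (-1) ^ (M + 1) * q ^ ((M + 1) ^ 2 + (M + 1)) *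
      fineSum q u (0 + (M + 1)) (M + 1)), ?_⟩
    linear_combination -2 * q * hr

end Gauss

/-! ### Theta series over `ZMod 3` and the operator `U` -/

/-- The sign `(-1) ^ x` in `ZMod 3`. -/
def sgn (x : ℤ) : ZMod 3 := if Even x then 1 else -1

theorem sgn_add (x y : ℤ) : sgn (x + y) = sgn x * sgn y := by
  unfold sgn
  by_cases hx : Even x <;> by_cases hy : Even y <;> simp [Int.even_add, hx, hy]

theorem sgn_neg (x : ℤ) : sgn (-x) = sgn x := by simp [sgn]

theorem sgn_three_mul (x : ℤ) : sgn (3 * x) = sgn x := by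
  simp [sgn, Int.even_mul, show ¬ Even (3 : ℤ) by decide]

theorem sgn_natCast (n : ℕ) : sgn n = (-1) ^ n := by
  by_cases h : Even n
  · simp [sgn, h]
  · simp [sgn, h, (Nat.not_even_iff_odd.1 h).neg_one_pow]

/-- The theta series `∑ f(x) X ^ (a x²)` over all integers `x`. For `a > 0` the bound `|x| ≤ n` in the
`n`-th coefficient is no restriction. -/
noncomputable def theta (a : ℕ) (f : ℤ → ZMod 3) : (ZMod 3)⟦X⟧ :=
  PowerSeries.mk fun n => ∑ x ∈ Finset.Icc (-n : ℤ) n with (a : ℤ) * x ^ 2 = n, f x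

theorem abs_le_of_mul_sq {a n : ℕ} (ha : 0 < a) {x : ℤ} (h : (a : ℤ) * x ^ 2 ≤ n) :
    x ∈ Finset.Icc (-n : ℤ) n := by
  have ha' : (1 : ℤ) ≤ a := by exact_mod_cast ha
  have h1 : x ^ 2 ≤ n := by nlinarith [sq_nonneg x]
  have h2 : |x| ≤ x ^ 2 := by
    rw [← sq_abs]
    rcases (abs_nonneg x).eq_or_lt with h | h
    · rw [← h]; simp
    · nlinarith [Int.add_one_le_iff.2 h]
  exact Finset.mem_Icc.2 (abs_le.1 (h2.trans h1))

/-- The integer solutions `(x, y)` of `a x² + b y² = n`, for `a, b > 0` (see `mem_reps`). -/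
noncomputable def reps (a b n : ℕ) : Finset (ℤ × ℤ) :=
  (Finset.Icc (-n : ℤ) n ×ˢ Finset.Icc (-n : ℤ) n).filter
    fun z => (a : ℤ) * z.1 ^ 2 + (b : ℤ) * z.2 ^ 2 = n

theorem mem_reps {a b n : ℕ} (ha : 0 < a) (hb : 0 < b) {z : ℤ × ℤ} :
    z ∈ reps a b n ↔ (a : ℤ) * z.1 ^ 2 + (b : ℤ) * z.2 ^ 2 = n := by
  simp only [reps, Finset.mem_filter, Finset.mem_product, and_iff_right_iff_imp]
  intro h
  exact ⟨abs_le_of_mul_sq ha (by nlinarith [mul_nonneg (Int.natCast_nonneg b) (sq_nonneg z.2)]),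
    abs_le_of_mul_sq hb (by nlinarith [mul_nonneg (Int.natCast_nonneg a) (sq_nonneg z.1)])⟩

theorem coeff_theta_mul {a b : ℕ} (ha : 0 < a) (hb : 0 < b) (f g : ℤ → ZMod 3) (n : ℕ) :
    coeff n (theta a f * theta b g) = ∑ z ∈ reps a b n, f z.1 * g z.2 := by
  rw [coeff_mul]
  have hmaps : ∀ z ∈ reps a b n, (((a : ℤ) * z.1 ^ 2).toNat, ((b : ℤ) * z.2 ^ 2).toNat) ∈
      Finset.HasAntidiagonal.antidiagonal n := by
    intro z hz
    rw [mem_reps ha hb] at hz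
    rw [Finset.HasAntidiagonal.mem_antidiagonal]
    have h1 : 0 ≤ (a : ℤ) * z.1 ^ 2 := by positivity
    have h2 : 0 ≤ (b : ℤ) * z.2 ^ 2 := by positivity
    omega
  rw [← Finset.sum_fiberwise_of_maps_to hmaps]
  refine Finset.sum_congr rfl ?_
  rintro ⟨i, j⟩ hij
  rw [Finset.HasAntidiagonal.mem_antidiagonal] at hij
  simp only [theta, coeff_mk]
  rw [Finset.sum_mul_sum, ← Finset.sum_product']
  refine Finset.sum_congr ?_ fun _ _ => rfl
  ext ⟨x, y⟩
  have h1 : 0 ≤ (a : ℤ) * x ^ 2 := by positivity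
  have h2 : 0 ≤ (b : ℤ) * y ^ 2 := by positivity
  simp only [Finset.mem_product, Finset.mem_filter, mem_reps ha hb, Prod.mk.injEq]
  constructor
  · rintro ⟨⟨-, hx⟩, ⟨-, hy⟩⟩
    refine ⟨?_, ?_, ?_⟩ <;> simp only at * <;> omega
  · rintro ⟨h, hx, hy⟩
    have hx' : (a : ℤ) * x ^ 2 = i := by simp only at *; omega
    have hy' : (b : ℤ) * y ^ 2 = j := by simp only at *; omega
    exact ⟨⟨abs_le_of_mul_sq ha hx'.le, hx'⟩, ⟨abs_le_of_mul_sq hb hy'.le, hy'⟩⟩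

theorem coeff_theta_eq {a n M : ℕ} (ha : 0 < a) (hM : n ≤ M) (f : ℤ → ZMod 3) :
    coeff n (theta a f) = ∑ x ∈ Finset.Icc (-M : ℤ) M, if (a : ℤ) * x ^ 2 = n then f x else 0 := by
  rw [theta, coeff_mk, ← Finset.sum_filter]
  refine Finset.sum_congr ?_ fun _ _ => rfl
  ext x
  simp only [Finset.mem_filter, and_congr_left_iff]
  intro h
  have := abs_le_of_mul_sq ha h.le
  simp only [Finset.mem_Icc] at *
  omega

theorem sum_Icc_neg (g : ℤ → ZMod 3) (M : ℕ) : ∑ x ∈ Finset.Icc (-M : ℤ) M, g x =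
    g 0 + ∑ j ∈ Finset.range M, (g (j + 1) + g (-(j + 1))) := by
  induction M with
  | zero => simp
  | succ M ih =>
    have : Finset.Icc (-(M + 1 : ℕ) : ℤ) (M + 1 : ℕ) =
        insert ((M : ℤ) + 1) (insert (-((M : ℤ) + 1)) (Finset.Icc (-M : ℤ) M)) := by
      ext x
      simp only [Finset.mem_insert, Finset.mem_Icc]
      push_cast
      omega
    rw [this, Finset.sum_insert, Finset.sum_insert, ih, Finset.sum_range_succ]
    · ring
    · simp
    · simp; omega

theorem theta_partial {a : ℕ} (ha : 0 < a) (f : ℤ → ZMod 3) (hf : ∀ x, f (-x) = f x) (M : ℕ) :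
    X ^ M ∣ theta a f -
      (C (f 0) + 2 * ∑ j ∈ Finset.range M, C (f (j + 1)) * X ^ (a * (j + 1) ^ 2)) := by
  rw [X_pow_dvd_iff]
  intro n hn
  rw [map_sub, coeff_theta_eq ha hn.le, sum_Icc_neg, sub_eq_zero, map_add, two_mul, map_add,
    map_sum, ← Finset.sum_add_distrib]
  congr 1
  · rw [coeff_C]
    simp [eq_comm]
  · refine Finset.sum_congr rfl fun j _ => ?_
    rw [hf, coeff_C_mul, coeff_X_pow, neg_sq]
    have : ((a : ℤ) * ((j : ℤ) + 1) ^ 2 = n) ↔ n = a * (j + 1) ^ 2 := by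
      rw [eq_comm]; norm_cast
    simp only [this]
    split_ifs <;> simp

/-- The operator `∑ c(n) Xⁿ ↦ ∑ c(3n) Xⁿ`. -/
noncomputable def U (f : (ZMod 3)⟦X⟧) : (ZMod 3)⟦X⟧ := PowerSeries.mk fun n => coeff (3 * n) f

theorem U_add (f g) : U (f + g) = U f + U g := by ext; simp [U]
theorem U_sub (f g) : U (f - g) = U f - U g := by ext; simp [U]

theorem U_mul_expand (f g : (ZMod 3)⟦X⟧) : U (f * expand 3 three_ne_zero g) = U f * g := by
  ext n
  simp only [U, coeff_mk, coeff_mul]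
  symm
  refine Finset.sum_of_injOn (fun z => (3 * z.1, 3 * z.2)) ?_ ?_ ?_ ?_
  · rintro ⟨x, y⟩ - ⟨z, w⟩ - h
    simp only [Prod.mk.injEq] at h ⊢
    omega
  · rintro ⟨x, y⟩ h
    simp only [Finset.mem_coe, Finset.HasAntidiagonal.mem_antidiagonal] at h ⊢
    omega
  · rintro ⟨x, y⟩ h h'
    rw [Finset.HasAntidiagonal.mem_antidiagonal] at h
    simp only at h ⊢
    rw [coeff_expand_of_not_dvd, mul_zero]
    rintro ⟨w, rfl⟩
    refine h' ⟨(n - w, w), ?_, ?_⟩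
    · simp; omega
    · simp; omega
  · rintro ⟨x, y⟩ -
    simp [coeff_expand_mul]

theorem theta_three_mul {a : ℕ} (ha : 0 < a) (f : ℤ → ZMod 3) :
    theta (3 * a) f = expand 3 three_ne_zero (theta a f) := by
  ext n
  by_cases h : 3 ∣ n
  · obtain ⟨m, rfl⟩ := h
    rw [coeff_expand_mul, coeff_theta_eq (by omega) le_rfl, coeff_theta_eq ha (M := 3 * m) (by omega)]
    refine Finset.sum_congr rfl fun x _ => ?_
    congr 1
    push_cast
    rw [eq_iff_iff, mul_assoc]
    omega
  · rw [coeff_expand_of_not_dvd _ _ _ h, theta, coeff_mk]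
    refine Finset.sum_eq_zero fun x hx => absurd ?_ h
    have := (Finset.mem_filter.1 hx).2
    zify
    exact ⟨a * x ^ 2, by rw [← this]; push_cast; ring⟩

/-- The Frobenius congruence `θ(q)³ ≡ θ(q³)` modulo `3`. -/
theorem theta_frob {a : ℕ} (ha : 0 < a) (f : ℤ → ZMod 3) : theta a f ^ 3 = theta (3 * a) f := by
  rw [theta_three_mul ha]
  have := MvPowerSeries.map_frobenius_expand (σ := Unit) (R := ZMod 3) 3 three_ne_zero (f := theta a f)
  rw [ZMod.frobenius_zmod] at this
  rw [← this, MvPowerSeries.map_id]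
  rfl

/-- The restriction of `f` to the integers not divisible by `3`, extended by zero. -/
def coprimeTo3 (f : ℤ → ZMod 3) (x : ℤ) : ZMod 3 := if (3 : ℤ) ∣ x then 0 else f x

theorem theta_split {a : ℕ} (ha : 0 < a) (f : ℤ → ZMod 3) :
    theta a f = theta (9 * a) (fun x => f (3 * x)) + theta a (coprimeTo3 f) := by
  ext n
  rw [map_add]
  have h9 : coeff n (theta (9 * a) fun x => f (3 * x)) =
      coeff n (theta a fun x => if (3 : ℤ) ∣ x then f x else 0) := by
    simp only [theta, coeff_mk]
    rw [← Finset.sum_filter]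
    refine Finset.sum_bij (fun x _ => 3 * x) ?_ ?_ ?_ ?_
    · intro x hx
      have := (Finset.mem_filter.1 hx).2
      push_cast at this
      have h : (a : ℤ) * (3 * x) ^ 2 = n := by rw [← this]; ring
      simp only [Finset.mem_filter]
      exact ⟨⟨abs_le_of_mul_sq ha h.le, h⟩, dvd_mul_right _ _⟩
    · intro x _ y _ h; simpa using h
    · intro y hy
      simp only [Finset.mem_filter] at hy
      obtain ⟨⟨-, h⟩, x, rfl⟩ := hy
      have h : ((9 * a : ℕ) : ℤ) * x ^ 2 = n := by rw [← h]; push_cast; ring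
      exact ⟨x, Finset.mem_filter.2 ⟨abs_le_of_mul_sq (by omega) h.le, h⟩, rfl⟩
    · intros; rfl
  rw [h9]
  simp only [theta, coeff_mk, ← Finset.sum_add_distrib]
  refine Finset.sum_congr rfl fun x _ => ?_
  unfold coprimeTo3
  split_ifs <;> simp

theorem coeff_theta_eq_zero {a n : ℕ} {f : ℤ → ZMod 3}
    (h : ∀ x : ℤ, (a : ℤ) * x ^ 2 = n → f x = 0) : coeff n (theta a f) = 0 := by
  rw [theta, coeff_mk]
  exact Finset.sum_eq_zero fun x hx => h x (Finset.mem_filter.1 hx).2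

theorem U_theta_one : U (theta 1 1) = theta 3 1 := by
  rw [theta_split one_pos, U_add]
  have h0 : U (theta 1 (coprimeTo3 1)) = 0 := by
    ext n
    rw [U, coeff_mk, map_zero]
    refine coeff_theta_eq_zero fun x hx => ?_
    rw [coprimeTo3, if_pos]
    refine Int.prime_three.dvd_of_dvd_pow (n := 2) ⟨n, ?_⟩
    push_cast at hx
    linarith
  have : theta (9 * 1) (fun x => (1 : ℤ → ZMod 3) (3 * x)) = 1 * expand 3 three_ne_zero (theta 3 1) := by
    rw [one_mul, ← theta_three_mul (by norm_num)]; rfl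
  rw [h0, this, U_mul_expand, add_zero]
  suffices U 1 = 1 by rw [this, one_mul]
  ext n
  simp [U, coeff_one]

/-- If `3 ∤ y z` then `x² + 2y² + 2z² ≡ x² + 1` modulo `3`, which is never `0`. -/
theorem U_vanish : U (theta 1 1 * (theta 2 (coprimeTo3 sgn)) ^ 2) = 0 := by
  have sq_mod {x : ℤ} (hx : ¬ (3 : ℤ) ∣ x) : x ^ 2 % 3 = 1 := by
    rcases (by omega : x % 3 = 1 ∨ x % 3 = 2) with h | h <;> simp [pow_two, Int.mul_emod, h]
  have sq_mod' (x : ℤ) : x ^ 2 % 3 = 0 ∨ x ^ 2 % 3 = 1 := by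
    by_cases hx : (3 : ℤ) ∣ x
    · left; obtain ⟨y, rfl⟩ := hx; ring_nf; omega
    · exact .inr (sq_mod hx)
  have hB {j : ℕ} (hj : j % 3 ≠ 2) : coeff j (theta 2 (coprimeTo3 sgn)) = 0 := by
    refine coeff_theta_eq_zero fun x hx => ?_
    rw [coprimeTo3, if_pos]
    by_contra h
    have := sq_mod h
    push_cast at hx
    omega
  have h1 {j : ℕ} (hj : j % 3 = 2) : coeff j (theta 1 1) = 0 := by
    refine coeff_theta_eq_zero fun x hx => ?_
    have := sq_mod' x
    push_cast at hx
    omega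
  have hB2 {j : ℕ} (hj : j % 3 ≠ 1) : coeff j (theta 2 (coprimeTo3 sgn) ^ 2) = 0 := by
    rw [pow_two, coeff_mul]
    refine Finset.sum_eq_zero fun z hz => ?_
    rw [Finset.HasAntidiagonal.mem_antidiagonal] at hz
    by_cases h : z.1 % 3 = 2
    · rw [hB (j := z.2) (by omega), mul_zero]
    · rw [hB h, zero_mul]
  ext n
  rw [U, coeff_mk, coeff_mul, map_zero]
  refine Finset.sum_eq_zero fun z hz => ?_
  rw [Finset.HasAntidiagonal.mem_antidiagonal] at hz
  by_cases h : z.2 % 3 = 1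
  · rw [h1 (j := z.1) (by omega), zero_mul]
  · rw [hB2 h, mul_zero]

/-- The action of `U` on the signed theta series of the norm form `x² + 2y²` of `ℤ[√-2]`. As
`3 = (1 + √-2)(1 - √-2)`, an element of norm `3n` is divisible by one of the two factors, and by
both exactly when it is divisible by `3`. -/
theorem U_binary : U (theta 1 1 * theta 2 sgn) =
    2 * (theta 1 sgn * theta 2 sgn) - theta 3 1 * theta 6 sgn := by
  ext n
  rw [U, coeff_mk, map_sub, two_mul, map_add, coeff_theta_mul one_pos two_pos,
    coeff_theta_mul one_pos two_pos, coeff_theta_mul three_pos (by norm_num)]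
  simp only [Pi.one_apply, one_mul]
  have m1 {z : ℤ × ℤ} : z ∈ reps 1 2 (3 * n) ↔ z.1 ^ 2 + 2 * z.2 ^ 2 = 3 * n := by
    rw [mem_reps one_pos two_pos]; push_cast; rw [one_mul]
  have m2 {z : ℤ × ℤ} : z ∈ reps 1 2 n ↔ z.1 ^ 2 + 2 * z.2 ^ 2 = n := by
    rw [mem_reps one_pos two_pos]; push_cast; rw [one_mul]
  have m3 {z : ℤ × ℤ} : z ∈ reps 3 6 n ↔ 3 * z.1 ^ 2 + 6 * z.2 ^ 2 = n := by
    rw [mem_reps three_pos (by norm_num)]; push_cast; rfl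
  -- `(u, v) ↦ (u - 2v, u + v)` is multiplication of `u + v√-2` by `1 + √-2`, whose norm is `3`.
  have hp : ∑ z ∈ reps 1 2 (3 * n) with (3 : ℤ) ∣ z.1 - z.2, sgn z.2 =
      ∑ z ∈ reps 1 2 n, sgn z.1 * sgn z.2 := by
    symm
    refine Finset.sum_bij (fun z _ => (z.1 - 2 * z.2, z.1 + z.2)) ?_ ?_ ?_ ?_
    · intro z hz
      rw [m2] at hz
      rw [Finset.mem_filter, m1]
      exact ⟨by rw [← hz]; ring, ⟨-z.2, by ring⟩⟩
    · rintro ⟨x, y⟩ - ⟨z, w⟩ - h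
      simp only [Prod.mk.injEq] at h ⊢
      omega
    · rintro ⟨x, y⟩ hz
      rw [Finset.mem_filter, m1] at hz
      obtain ⟨h, k, hk⟩ := hz
      simp only at h hk
      obtain rfl : x = y + 3 * k := by omega
      refine ⟨(y + k, -k), ?_, ?_⟩
      · rw [m2]; simp only; nlinarith
      · simp only [Prod.mk.injEq]; constructor <;> ring
    · intro z _
      rw [sgn_add]
  have hm : ∑ z ∈ reps 1 2 (3 * n) with (3 : ℤ) ∣ z.1 + z.2, sgn z.2 =
      ∑ z ∈ reps 1 2 n, sgn z.1 * sgn z.2 := by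
    rw [← hp]
    refine Finset.sum_nbij' (fun z => (z.1, -z.2)) (fun z => (z.1, -z.2)) ?_ ?_ ?_ ?_ ?_
    · intro z; simp [m1]
    · intro z; simp [m1, ← sub_eq_add_neg]
    · intro z; simp
    · intro z; simp
    · intro z; simp [sgn_neg]
  have hb : ∑ z ∈ reps 1 2 (3 * n) with (3 : ℤ) ∣ z.1 - z.2 ∧ (3 : ℤ) ∣ z.1 + z.2, sgn z.2 =
      ∑ z ∈ reps 3 6 n, sgn z.2 := by
    symm
    refine Finset.sum_bij (fun z _ => (3 * z.1, 3 * z.2)) ?_ ?_ ?_ ?_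
    · intro z hz
      rw [m3] at hz
      rw [Finset.mem_filter, m1]
      exact ⟨by rw [← hz]; ring, by simp only; omega, by simp only; omega⟩
    · rintro ⟨x, y⟩ - ⟨z, w⟩ - h
      simp only [Prod.mk.injEq] at h ⊢
      omega
    · rintro ⟨x, y⟩ hz
      rw [Finset.mem_filter, m1] at hz
      obtain ⟨h, h1, h2⟩ := hz
      simp only at h h1 h2
      obtain ⟨s, rfl⟩ : (3 : ℤ) ∣ x := by omega
      obtain ⟨t, rfl⟩ : (3 : ℤ) ∣ y := by omega
      exact ⟨(s, t), by rw [m3]; simp only; nlinarith, rfl⟩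
    · intro z _
      rw [sgn_three_mul]
  have hu : reps 1 2 (3 * n) = (reps 1 2 (3 * n)).filter (fun z => (3 : ℤ) ∣ z.1 - z.2) ∪
      (reps 1 2 (3 * n)).filter (fun z => (3 : ℤ) ∣ z.1 + z.2) := by
    rw [← Finset.filter_or, eq_comm, Finset.filter_eq_self]
    intro z hz
    rw [m1] at hz
    rw [← Int.prime_three.dvd_mul]
    exact ⟨n - z.2 ^ 2, by linear_combination hz⟩
  have := Finset.sum_union_inter (s₁ := (reps 1 2 (3 * n)).filter (fun z => (3 : ℤ) ∣ z.1 - z.2))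
    (s₂ := (reps 1 2 (3 * n)).filter (fun z => (3 : ℤ) ∣ z.1 + z.2)) (f := fun z => sgn z.2)
  rw [← hu, ← Finset.filter_and, hp, hm, hb] at this
  rw [← this]
  ring

/-- Split `φ(-q²)` as `A + B` according to whether `3` divides the summation variable, and use
`(A + B)² = 2A(A + B) - A² + B²`: `A` is a series in `q³` and the term `B²` contributes nothing. -/
theorem U_ternary : U (theta 1 1 * theta 2 sgn ^ 2) =
    theta 1 sgn * theta 6 sgn * theta 2 sgn := by
  have hs : theta 2 sgn = expand 3 three_ne_zero (theta 6 sgn) + theta 2 (coprimeTo3 sgn) := by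
    conv_lhs => rw [theta_split two_pos]
    simp_rw [sgn_three_mul]
    rw [← theta_three_mul (by norm_num)]
    rfl
  have hU2 := U_vanish
  have hR := U_binary
  have h3 : (3 : (ZMod 3)⟦X⟧) = 0 := by
    have : (3 : (ZMod 3)⟦X⟧) = C (3 : ZMod 3) := (map_ofNat C 3).symm
    rw [this, show (3 : ZMod 3) = 0 from rfl, map_zero]
  set B := theta 2 (coprimeTo3 sgn)
  set t6 := theta 6 sgn
  have e : theta 1 1 * theta 2 sgn ^ 2 = (theta 1 1 * theta 2 sgn) * expand 3 three_ne_zero (2 * t6)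
      - theta 1 1 * expand 3 three_ne_zero (t6 ^ 2) + theta 1 1 * B ^ 2 := by
    rw [hs, map_mul, map_pow, map_ofNat]
    ring
  rw [e, U_add, U_sub, hU2, U_mul_expand, U_mul_expand, hR, U_theta_one]
  linear_combination (theta 1 sgn * t6 * theta 2 sgn - theta 3 1 * t6 ^ 2) * h3

/-- A solution of `x² + 6y² = 9n` has both `x` and `y` divisible by `3`. -/
theorem coeff_nine (n : ℕ) : coeff n (theta 1 sgn * theta 6 sgn) =
    coeff (9 * n) (theta 1 sgn * theta 6 sgn) := by
  rw [coeff_theta_mul one_pos (by norm_num), coeff_theta_mul one_pos (by norm_num)]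
  have m {k : ℕ} {z : ℤ × ℤ} : z ∈ reps 1 6 k ↔ z.1 ^ 2 + 6 * z.2 ^ 2 = k := by
    rw [mem_reps one_pos (by norm_num)]; push_cast; rw [one_mul]
  refine Finset.sum_bij (fun z _ => (3 * z.1, 3 * z.2)) ?_ ?_ ?_ ?_
  · intro z hz
    rw [m] at hz ⊢
    push_cast
    rw [← hz]; ring
  · rintro ⟨x, y⟩ - ⟨z, w⟩ - h
    simp only [Prod.mk.injEq] at h ⊢
    omega
  · rintro ⟨x, y⟩ hz
    rw [m] at hz
    push_cast at hz
    obtain ⟨s, rfl⟩ : (3 : ℤ) ∣ x :=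
      Int.prime_three.dvd_of_dvd_pow (n := 2) ⟨3 * n - 2 * y ^ 2, by linear_combination hz⟩
    obtain ⟨t, rfl⟩ : (3 : ℤ) ∣ y := by
      refine Int.prime_three.dvd_of_dvd_pow (n := 2) ?_
      have : 2 * y ^ 2 = 3 * (n - s ^ 2) := by nlinarith
      omega
    exact ⟨(s, t), by rw [m]; simp only; nlinarith, rfl⟩
  · intro z _
    rw [sgn_three_mul, sgn_three_mul]

/-! ### The generating function of `pbarOdd` as a quotient of theta series -/

section Limit
open scoped PowerSeries.WithPiTopology
open Filter

/-- The finite product `∏ (1 - qⁱ) / (1 + qⁱ)` over `1 ≤ i ≤ M`. -/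
noncomputable def gaussProd (q : (ZMod 3)⟦X⟧) (M : ℕ) : (ZMod 3)⟦X⟧ :=
  ∏ i ∈ Finset.range M, (1 - q ^ (i + 1)) * (1 + q ^ (i + 1))⁻¹

theorem gaussProd_dvd {q : (ZMod 3)⟦X⟧} (hq : X ∣ q) (M : ℕ) : X ^ M ∣ gaussProd q M -
      (1 + 2 * ∑ j ∈ Finset.range M, (-1) ^ (j + 1) * q ^ ((j + 1) ^ 2)) := by
  refine (pow_dvd_pow_of_dvd hq M).trans (gauss q (fun k => (1 + q ^ (k + 1))⁻¹) (fun k => ?_) M)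
  refine PowerSeries.inv_mul_cancel _ ?_
  simp [X_dvd_iff.1 hq]

theorem gaussProd_neg_X (M : ℕ) : X ^ M ∣ gaussProd (-X) M - theta 1 1 := by
  have h1 := gaussProd_dvd (q := -X) (by simp) M
  have h2 := theta_partial one_pos 1 (fun _ => rfl) M
  have e : (1 : (ZMod 3)⟦X⟧) + 2 * ∑ j ∈ Finset.range M, (-1) ^ (j + 1) * (-X) ^ ((j + 1) ^ 2) =
      C ((1 : ℤ → ZMod 3) 0) + 2 * ∑ j ∈ Finset.range M,
        C ((1 : ℤ → ZMod 3) (j + 1)) * X ^ (1 * (j + 1) ^ 2) := by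
    simp only [Pi.one_apply, map_one, one_mul]
    congr 2
    refine Finset.sum_congr rfl fun j _ => ?_
    rw [neg_pow X, ← mul_assoc, ← pow_add, Even.neg_one_pow, one_mul]
    rw [show j + 1 + (j + 1) ^ 2 = (j + 1) * (j + 1 + 1) by ring]
    exact Nat.even_mul_succ_self _
  rw [e] at h1
  simpa using dvd_sub h1 h2

theorem gaussProd_X_sq (M : ℕ) : X ^ M ∣ gaussProd (X ^ 2) M - theta 2 sgn := by
  have h1 := gaussProd_dvd (q := X ^ 2) (dvd_pow_self _ two_ne_zero) M
  have h2 := theta_partial two_pos sgn sgn_neg M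
  have e : (1 : (ZMod 3)⟦X⟧) + 2 * ∑ j ∈ Finset.range M, (-1) ^ (j + 1) * (X ^ 2) ^ ((j + 1) ^ 2) =
      C (sgn 0) + 2 * ∑ j ∈ Finset.range M,
        C (sgn (j + 1)) * X ^ (2 * (j + 1) ^ 2) := by
    rw [show sgn 0 = 1 by simp [sgn], map_one]
    congr 2
    refine Finset.sum_congr rfl fun j _ => ?_
    rw [← pow_mul, show ((j : ℤ) + 1) = ((j + 1 : ℕ) : ℤ) by push_cast; rfl, sgn_natCast]
    simp
  rw [e] at h1
  simpa using dvd_sub h1 h2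

local instance : TopologicalSpace (ZMod 3) := ⊥
local instance : DiscreteTopology (ZMod 3) := ⟨rfl⟩

theorem tendsto_of_dvd {s : ℕ → (ZMod 3)⟦X⟧} {t : (ZMod 3)⟦X⟧} (h : ∀ M, X ^ M ∣ s M - t) :
    Tendsto s atTop (nhds t) := by
  rw [WithPiTopology.tendsto_iff_coeff_tendsto]
  refine fun d => tendsto_atTop_of_eventually_const (i₀ := d + 1) fun M hM => ?_
  have := X_pow_dvd_iff.1 (h M) d (by omega)
  rwa [map_sub, sub_eq_zero] at this

/-- The Euler factor of the part size `i + 1` in the generating function: `(1 + X ^ (i + 1)) /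
(1 - X ^ (i + 1))` if `i + 1` is odd and `1` otherwise. -/
noncomputable def oddFactor (i : ℕ) : (ZMod 3)⟦X⟧ :=
  1 + ∑' j, oddWeight (R := ZMod 3) (i + 1) (j + 1) • X ^ ((i + 1) * (j + 1))

theorem oddFactor_odd (j : ℕ) : oddFactor (2 * j + 1) = 1 := by
  have : ¬ Odd (2 * j + 1 + 1) := by
    rw [Nat.not_odd_iff_even]; exact ⟨j + 1, by ring⟩
  simp [oddFactor, oddWeight, this]

theorem oddFactor_even (j : ℕ) :
    oddFactor (2 * j) * (1 - X ^ (2 * j + 1)) = 1 + X ^ (2 * j + 1) := by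
  have ho : Odd (2 * j + 1) := ⟨j, rfl⟩
  have hc : constantCoeff (X ^ (2 * j + 1) : (ZMod 3)⟦X⟧) = 0 := by simp
  have hg := WithPiTopology.tsum_pow_mul_one_sub_of_constantCoeff_eq_zero hc
  have hs := WithPiTopology.summable_pow_of_constantCoeff_eq_zero hc
  have e : ∑' i, oddWeight (R := ZMod 3) (2 * j + 1) (i + 1) •
      (X : (ZMod 3)⟦X⟧) ^ ((2 * j + 1) * (i + 1)) =
      2 * X ^ (2 * j + 1) * ∑' i, (X ^ (2 * j + 1)) ^ i := by
    rw [← hs.tsum_mul_left]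
    refine tsum_congr fun i => ?_
    rw [oddWeight, if_pos ho, smul_eq_C_mul, map_ofNat, mul_assoc, ← pow_succ', pow_mul]
  rw [oddFactor, e]
  linear_combination 2 * X ^ (2 * j + 1) * hg

/-- Replacing `q` by `-q` inverts the factors of Gauss's product at odd exponents; the factors at
even exponents make up the product at `q²`. -/
theorem finite_quotient (M : ℕ) : (∏ i ∈ Finset.range (2 * M), oddFactor i) * gaussProd (X ^ 2) M =
    gaussProd (-X) (2 * M) := by
  induction M with
  | zero => simp [gaussProd]
  | succ M ih =>
    simp only [gaussProd] at *
    rw [show 2 * (M + 1) = 2 * M + 1 + 1 by ring]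
    simp only [Finset.prod_range_succ]
    rw [← ih, oddFactor_odd, Odd.neg_pow ⟨M, rfl⟩, Even.neg_pow ⟨M + 1, by ring⟩, ← pow_mul,
      show 2 * (M + 1) = 2 * M + 1 + 1 by ring]
    have hi : (1 + -X ^ (2 * M + 1) : (ZMod 3)⟦X⟧) * (1 + -X ^ (2 * M + 1))⁻¹ = 1 :=
      PowerSeries.mul_inv_cancel _ (by simp)
    have hF : oddFactor (2 * M) = (1 - -X ^ (2 * M + 1)) * (1 + -X ^ (2 * M + 1))⁻¹ := by
      linear_combination (1 + -X ^ (2 * M + 1))⁻¹ * oddFactor_even M - oddFactor (2 * M) * hi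
    rw [hF]
    ring

/-- `P(q) φ(-q²) = φ(q)`, where `P` is the generating function of `pbarOdd`. -/
theorem genFun_mul_theta :
    Nat.Partition.genFun (oddWeight (R := ZMod 3)) * theta 2 sgn = theta 1 1 := by
  have h2 : Tendsto (fun M : ℕ => 2 * M) atTop atTop :=
    tendsto_id.const_mul_atTop' two_pos
  have hP := ((Nat.Partition.hasProd_genFun (oddWeight (R := ZMod 3))).tendsto_prod_nat).comp h2
  have hL := hP.mul (tendsto_of_dvd gaussProd_X_sq)
  have hR := (tendsto_of_dvd gaussProd_neg_X).comp h2
  refine tendsto_nhds_unique hL (hR.congr fun M => (finite_quotient M).symm)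

end Limit

theorem coeff_genFun_eq (n : ℕ) :
    coeff n (Nat.Partition.genFun (oddWeight (R := ZMod 3))) = (pbarOdd n : ZMod 3) := by
  rw [Nat.Partition.coeff_genFun, pbarOdd_eq_sum]
  push_cast [Finsupp.prod, oddWeight]
  rfl

/-- `∑ pbarOdd(3n) qⁿ ≡ φ(-q) φ(-q⁶)` modulo `3`. -/
theorem U_genFun :
    U (Nat.Partition.genFun (oddWeight (R := ZMod 3))) = theta 1 sgn * theta 6 sgn := by
  have h0 : theta 2 sgn ≠ 0 := by
    intro h
    have := congrArg (coeff 0) h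
    simp [theta, sgn, Finset.filter_singleton] at this
  refine mul_right_cancel₀ h0 ?_
  rw [← U_ternary, ← U_mul_expand, ← theta_three_mul two_pos, ← theta_frob two_pos,
    ← genFun_mul_theta]
  congr 1
  ring

theorem pbarOdd_mod_three (n : ℕ) : pbarOdd (3 * n) ≡ pbarOdd (27 * n) [MOD 3] := by
  rw [← ZMod.natCast_eq_natCast_iff, ← coeff_genFun_eq, ← coeff_genFun_eq]
  have h (m : ℕ) : coeff (3 * m) (Nat.Partition.genFun (oddWeight (R := ZMod 3))) =
      coeff m (theta 1 sgn * theta 6 sgn) := by rw [← U_genFun, U, coeff_mk]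
  rw [show 27 * n = 3 * (9 * n) by ring, h, h, coeff_nine]

theorem pbarOdd_internal_congruence (n : ℕ) :
    pbarOdd (3 * n) ≡ pbarOdd (27 * n) [MOD 12] := by
  rcases eq_or_ne n 0 with rfl | hn
  · rfl
  have h4 : pbarOdd (3 * n) ≡ pbarOdd (27 * n) [MOD 4] := by
    have h3 : 3 * n ≠ 0 := by omega
    have hp := (card_odd_divisors_parity h3).mul_left' 2
    rw [show 9 * (3 * n) = 27 * n by ring] at hp
    exact (pbarOdd_mod_four h3).trans (hp.trans (pbarOdd_mod_four (by omega)).symm)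
  exact (Nat.modEq_and_modEq_iff_modEq_mul (by norm_num : Nat.Coprime 3 4)).1
    ⟨pbarOdd_mod_three n, h4⟩
end
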